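/- arXiv:0901.3518 — 4 statements merged into one kernel-verified Lean document; each statement's English description precedes it below -/
import Mathlib

section
/- Let q be a function of class Q. Then every zero of the entire function G(z) = ∫_{-∞}^{∞} e^{-q(t)} e^{izt} dt is real; that is, if G(z) = 0 for some z ∈ ℂ, then Im(z) = 0. -/
/-!
The kernel `e^{-q}` is approximated by step functions whose Fourier transforms are, up to an
elementary factor, trigonometric polynomials with all zeros on the real axis; Hurwitz's theorem
then carries this property to the limit.

*Reduction to polynomials.* Replacing `e^{μt²}` by `(1 + μt²/n)^n` and truncating the product gives
even polynomials `qₙ → q` with nonnegative coefficients whose roots all lie on the imaginary axis.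
By Gauss–Lucas the roots of `qₙ'` lie there too. The functions `e^{-qₙ}` are dominated by one
Gaussian, so their Fourier transforms converge locally uniformly
(`HasRealZeros.of_tendsto`, `IsNicePoly.hasRealZeros`).

*Discretization.* For a polynomial `q` with derivative `d`, a mesh `h` and `x_j = (h/2) d((j+1/2)h)`,
put `p_k = ∏_{j<k} (1 - x_j)/(1 + x_j)`, which is an approximation of `e^{-q(kh)}`. The mesh is
chosen so that `x_K = 1`, whence `p_k = 0` for `k > K`. The recursion
`x(i) (p_{|i|} + p_{|i-1|}) = p_{|i-1|} - p_{|i|}` with `x(i) = (h/2) d((i - 1/2)h)` holds for all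
integers `i`. In terms of `P(w) = ∑_{|i| ≤ K} p_{|i|} w^{i+K}` it reads
`g(ϑ) [(w + 1) P] = (w - 1) P`, where `g(s) = (h/2) d(hs)` and `ϑ = w d/dw - (2K+1)/2`.

*Zeros of `P` (`norm_root_eq_one`).* Suppose the largest modulus `R` of a root of `P` exceeds `1`.
If all roots of a polynomial `Q` of degree `M` lie in `|w| ≤ R`, then `Re (wQ'/Q) ≥ M/2` for
`|w| ≥ R`, strictly unless all roots of `Q` have modulus `|w|`. Hence each factor `ϑ - r` of `g(ϑ)`,
with `r` imaginary, keeps the roots in `|w| ≤ R` and lowers the multiplicity of every root of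
modulus `R` by one, without creating new roots there. So at a root `w₀` of `P` of modulus `R` the
left side of the equation vanishes to strictly smaller order than `P`, while the right side vanishes
to the same order as `P`: a contradiction. As `P` is palindromic, all its roots are unimodular, and
`w = e^{izh}` is unimodular only for real `z`.
-/

/-- A function `q : ℝ → ℝ` is of class Q if
`q t = k * t^(2m) * exp (μ t²) * ∏_n (1 + t²/βₙ²)` with `k > 0`, `m ≥ 1`, `μ ≥ 0`,
the `βₙ` nonzero reals over a finite or countable index set with `∑ 1/βₙ² < ∞`
(the product being `1` if the index set is empty), and there are `T, α > 0`
with `q t > t^(2+α)` for all `t ≥ T`. -/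
def IsClassQ (q : ℝ → ℝ) : Prop :=
  ∃ (k : ℝ) (m : ℕ) (μ : ℝ) (S : Set ℕ) (β : ℕ → ℝ),
    0 < k ∧ 0 < m ∧ 0 ≤ μ ∧ (∀ n ∈ S, β n ≠ 0) ∧
    Summable (fun n : S => 1 / (β n) ^ 2) ∧
    (∀ t : ℝ, q t = k * t ^ (2 * m) * Real.exp (μ * t ^ 2) *
      ∏' n : S, (1 + t ^ 2 / (β n) ^ 2)) ∧
    ∃ T α : ℝ, 0 < T ∧ 0 < α ∧ ∀ t : ℝ, T ≤ t → t ^ (2 + α) < q t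

open Polynomial MeasureTheory Filter Topology

/-! ### Polynomials with all roots on the unit circle -/

/-- The operator `Q ↦ wQ' - sQ`, acting on coefficients as multiplication by `k - s`. -/
noncomputable def eulerOp (s : ℂ) (Q : ℂ[X]) : ℂ[X] := X * derivative Q - C s * Q

lemma coeff_eulerOp (s : ℂ) (Q : ℂ[X]) (k : ℕ) :
    (eulerOp s Q).coeff k = ((k : ℂ) - s) * Q.coeff k := by
  unfold eulerOp
  rw [coeff_sub, coeff_C_mul]
  cases k with
  | zero => simp
  | succ n => rw [coeff_X_mul, coeff_derivative]; push_cast; ring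

/-- `Q` has degree exactly `M`, its extreme coefficients have equal modulus, and its roots lie in the
disc `|w| ≤ R`. For `R > 1` the condition on the coefficients prevents all roots from having modulus
at least `R`, since the product of the roots is unimodular. -/
structure EdgeBalanced (M : ℕ) (R : ℝ) (Q : ℂ[X]) : Prop where
  natDegree_le : Q.natDegree ≤ M
  coeff_ne : Q.coeff M ≠ 0
  norm_coeff : ‖Q.coeff 0‖ = ‖Q.coeff M‖
  roots_le : ∀ w, Q.IsRoot w → ‖w‖ ≤ R

lemma EdgeBalanced.natDegree_eq {M : ℕ} {R : ℝ} {Q : ℂ[X]} (h : EdgeBalanced M R Q) :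
    Q.natDegree = M :=
  le_antisymm h.natDegree_le (le_natDegree_of_ne_zero h.coeff_ne)

lemma EdgeBalanced.ne_zero {M : ℕ} {R : ℝ} {Q : ℂ[X]} (h : EdgeBalanced M R Q) : Q ≠ 0 := by
  rintro rfl; exact h.coeff_ne (by simp)

lemma re_div_sub (w a : ℂ) (h : w ≠ a) :
    (w / (w - a)).re - 1 / 2 = (‖w‖ ^ 2 - ‖a‖ ^ 2) / (2 * ‖w - a‖ ^ 2) := by
  have h1 : Complex.normSq (w - a) ≠ 0 := by
    rw [Ne, Complex.normSq_eq_zero]; exact sub_ne_zero.mpr h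
  rw [← Complex.normSq_eq_norm_sq, ← Complex.normSq_eq_norm_sq, ← Complex.normSq_eq_norm_sq,
    Complex.div_re]
  field_simp
  simp only [Complex.normSq_apply, Complex.sub_re, Complex.sub_im]
  ring

/-- Outside the open disc of radius `R`, `Re (wQ'/Q) > M/2`, so `wQ' - sQ` can vanish only where `Q`
does. -/
lemma EdgeBalanced.eval_eulerOp_ne {M : ℕ} {R : ℝ} {Q : ℂ[X]} (h : EdgeBalanced M R Q) (hM : 0 < M)
    (hR : 1 < R) {s : ℂ} (hs : s.re = M / 2) {w : ℂ} (hw : R ≤ ‖w‖) (hQ : Q.eval w ≠ 0) :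
    (eulerOp s Q).eval w ≠ 0 := by
  intro h0
  have hsp : Splits Q := IsAlgClosed.splits Q
  have hcard : Q.roots.card = M := by rw [← h.natDegree_eq]; exact hsp.natDegree_eq_card_roots.symm
  have hroot : ∀ a ∈ Q.roots, w ≠ a ∧ ‖a‖ ≤ ‖w‖ := by
    intro a ha
    have := (mem_roots h.ne_zero).1 ha
    refine ⟨?_, (h.roots_le a this).trans hw⟩
    rintro rfl; exact hQ this
  -- Otherwise all roots have modulus `‖w‖ > 1`, although their product is unimodular.
  have hex : ∃ a ∈ Q.roots, ‖a‖ < ‖w‖ := by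
    by_contra! hcon
    have hall : ∀ a ∈ Q.roots, ‖a‖ = ‖w‖ := fun a ha => le_antisymm (hroot a ha).2 (hcon a ha)
    have e1 := hsp.coeff_zero_eq_leadingCoeff_mul_prod_roots
    have e2 : ‖Q.roots.prod‖ = ‖w‖ ^ M := by
      rw [← hcard, ← Multiset.prod_replicate, ← Multiset.map_const']
      have : ‖Q.roots.prod‖ = (Q.roots.map (fun a => ‖a‖)).prod := by
        exact map_multiset_prod (normHom (α := ℂ)) Q.roots
      rw [this]
      exact congrArg _ (Multiset.map_congr rfl hall)
    have e3 : ‖Q.coeff 0‖ = ‖Q.coeff M‖ * ‖w‖ ^ M := by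
      rw [e1, norm_mul, norm_mul, e2, leadingCoeff, h.natDegree_eq]; simp
    have e4 : 1 < ‖w‖ ^ M := one_lt_pow₀ (hR.trans_le hw) hM.ne'
    have e5 : 0 < ‖Q.coeff M‖ := norm_pos_iff.2 h.coeff_ne
    rw [h.norm_coeff] at e3
    nlinarith
  have hev : w * (Q.derivative.eval w / Q.eval w) = s := by
    have : w * Q.derivative.eval w - s * Q.eval w = 0 := by
      simpa [eulerOp] using h0
    field_simp
    linear_combination this
  rw [hsp.eval_derivative_div_eval_of_ne_zero hQ, ← Multiset.sum_map_mul_left] at hev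
  have hre : (Q.roots.map (fun a => (w / (w - a)).re)).sum = M / 2 := by
    rw [← hs, ← hev]
    have := map_multiset_sum Complex.reAddGroupHom (Q.roots.map fun a => w * (1 / (w - a)))
    simp only [Complex.coe_reAddGroupHom, Multiset.map_map] at this
    rw [this]
    congr 1
    refine Multiset.map_congr rfl fun a _ => ?_
    simp [div_eq_mul_inv]
  have hlt : (Q.roots.map (fun _ => (1 / 2 : ℝ))).sum <
      (Q.roots.map (fun a => (w / (w - a)).re)).sum := by
    obtain ⟨a, ha, haw⟩ := hex
    have pos : ∀ b ∈ Q.roots, 0 < 2 * ‖w - b‖ ^ 2 := fun b hb => by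
      have := norm_pos_iff.2 (sub_ne_zero.2 (hroot b hb).1)
      positivity
    refine Multiset.sum_lt_sum (fun b hb => ?_) ⟨a, ha, ?_⟩
    · have e := re_div_sub w b (hroot b hb).1
      have : 0 ≤ (‖w‖ ^ 2 - ‖b‖ ^ 2) / (2 * ‖w - b‖ ^ 2) :=
        div_nonneg (by nlinarith [norm_nonneg b, (hroot b hb).2]) (pos b hb).le
      linarith
    · have e := re_div_sub w a (hroot a ha).1
      have : 0 < (‖w‖ ^ 2 - ‖a‖ ^ 2) / (2 * ‖w - a‖ ^ 2) :=
        div_pos (by nlinarith [norm_nonneg a]) (pos a ha)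
      linarith
  rw [hre, Multiset.map_const', Multiset.sum_replicate, hcard] at hlt
  simp [div_eq_mul_inv] at hlt

lemma EdgeBalanced.eulerOp {M : ℕ} {R : ℝ} {Q : ℂ[X]} (h : EdgeBalanced M R Q) (hM : 0 < M)
    (hR : 1 < R) {s : ℂ} (hs : s.re = M / 2) : EdgeBalanced M R (eulerOp s Q) where
  natDegree_le := by
    rw [natDegree_le_iff_coeff_eq_zero]
    intro k hk
    rw [coeff_eulerOp, coeff_eq_zero_of_natDegree_lt (h.natDegree_le.trans_lt hk), mul_zero]
  coeff_ne := by
    rw [coeff_eulerOp]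
    refine mul_ne_zero (fun h0 => ?_) h.coeff_ne
    have := congrArg Complex.re h0
    have hM' : (0 : ℝ) < M := by exact_mod_cast hM
    simp [hs] at this
    linarith
  norm_coeff := by
    have : ‖((0 : ℕ) : ℂ) - s‖ = ‖(M : ℂ) - s‖ := by
      rw [Complex.norm_def, Complex.norm_def]
      congr 1
      simp [Complex.normSq_apply, hs]
      ring
    rw [coeff_eulerOp, coeff_eulerOp, norm_mul, norm_mul, this, h.norm_coeff]
  roots_le := by
    intro w hw
    by_contra! hlt
    exact h.eval_eulerOp_ne hM hR hs hlt.le (fun h0 => (h.roots_le w h0).not_gt hlt) hw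

lemma EdgeBalanced.rootMultiplicity_eulerOp {M : ℕ} {R : ℝ} {Q : ℂ[X]} (h : EdgeBalanced M R Q)
    (hM : 0 < M) (hR : 1 < R) {s : ℂ} (hs : s.re = M / 2) {w : ℂ} (hw : ‖w‖ = R) :
    (_root_.eulerOp s Q).rootMultiplicity w = Q.rootMultiplicity w - 1 := by
  by_cases h0 : Q.eval w = 0
  · obtain ⟨B, hB, hBd⟩ := exists_eq_pow_rootMultiplicity_mul_and_not_dvd Q h.ne_zero w
    have hpos : 0 < Q.rootMultiplicity w := (rootMultiplicity_pos h.ne_zero).2 h0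
    obtain ⟨n, hn⟩ := Nat.exists_eq_succ_of_ne_zero hpos.ne'
    rw [hn] at hB ⊢
    rw [dvd_iff_isRoot, IsRoot] at hBd
    set E : ℂ[X] := X * (C ((n : ℂ) + 1) * B + (X - C w) * derivative B) - C s * ((X - C w) * B)
      with hE
    have hfac : _root_.eulerOp s Q = E * (X - C w) ^ n := by
      rw [hB, hE]
      simp only [_root_.eulerOp, Nat.succ_eq_add_one, derivative_mul, derivative_X_sub_C_pow,
        Nat.add_sub_cancel, map_add, map_natCast, map_one]
      push_cast
      ring
    have hEw : ¬ E.IsRoot w := by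
      have hw0 : w ≠ 0 := by
        rintro rfl; simp at hw; linarith
      have hn1 : (n : ℂ) + 1 ≠ 0 := Nat.cast_add_one_ne_zero n
      simp [hE, IsRoot, hw0, hn1, hBd]
    have hE0 : E ≠ 0 := by
      intro h; apply hEw; rw [h]; simp [IsRoot]
    rw [hfac, rootMultiplicity_mul_X_sub_C_pow hE0, rootMultiplicity_eq_zero hEw]
    simp
  · rw [rootMultiplicity_eq_zero (p := Q) h0,
      rootMultiplicity_eq_zero (h.eval_eulerOp_ne hM hR hs hw.ge h0)]

/-- The effect of the product of the operators `w d/dw - M/2 - r`, for `r` in a list of imaginary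
numbers, on an edge-balanced polynomial. The subtraction in the multiplicity formula is truncated. -/
lemma EdgeBalanced.foldr {M : ℕ} {R : ℝ} (hM : 0 < M) (hR : 1 < R) {Q : ℂ[X]}
    (h : EdgeBalanced M R Q) (l : List ℂ) (hl : ∀ r ∈ l, r.re = 0) :
    EdgeBalanced M R (l.foldr (fun r P => _root_.eulerOp (M / 2 + r) P) Q) ∧
    (∀ w : ℂ, ‖w‖ = R → (l.foldr (fun r P => _root_.eulerOp (M / 2 + r) P) Q).rootMultiplicity w
      = Q.rootMultiplicity w - l.length) ∧
    ∀ k, (l.foldr (fun r P => _root_.eulerOp (M / 2 + r) P) Q).coeff k =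
      (l.map (fun r => (k : ℂ) - M / 2 - r)).prod * Q.coeff k := by
  induction l with
  | nil => simpa using h
  | cons r l ih =>
    obtain ⟨h1, h2, h3⟩ := ih fun r' hr' => hl r' (List.mem_cons_of_mem _ hr')
    have hs : ((M : ℂ) / 2 + r).re = M / 2 := by
      have := hl r List.mem_cons_self
      simp [this]
    refine ⟨h1.eulerOp hM hR hs, fun w hw => ?_, fun k => ?_⟩
    · rw [List.foldr_cons, h1.rootMultiplicity_eulerOp hM hR hs hw, h2 w hw, List.length_cons]
      omega
    · rw [List.foldr_cons, coeff_eulerOp, h3, List.map_cons, List.prod_cons]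
      ring

/-- A palindromic polynomial `P` of degree `2K` with `g(ϑ)[(w + 1)P] = N(w - 1)P`, where
`ϑ = w d/dw - (2K+1)/2` and `g` is a nonconstant polynomial with imaginary roots, has all its roots
on the unit circle. The equation is stated coefficientwise. -/
theorem norm_root_eq_one {K : ℕ} {g P : ℂ[X]} {N : ℂ} (hN : N ≠ 0)
    (hg : ∀ r, g.IsRoot r → r.re = 0) (hgd : 0 < g.natDegree)
    (hP0 : P.coeff 0 ≠ 0) (hPd : P.natDegree ≤ 2 * K)
    (hpal : ∀ k ≤ 2 * K, P.coeff (2 * K - k) = P.coeff k)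
    (hrec : ∀ k ≤ 2 * K + 1, g.eval ((k : ℂ) - ((2 * K + 1 : ℕ) : ℂ) / 2) * ((X + 1) * P).coeff k
      = N * ((X - 1) * P).coeff k)
    {w : ℂ} (hw : P.IsRoot w) : ‖w‖ = 1 := by
  have hPne : P ≠ 0 := by rintro rfl; simp at hP0
  have hlead : P.coeff (2 * K) = P.coeff 0 := by simpa using hpal 0 (by omega)
  have hdeg : P.natDegree = 2 * K :=
    le_antisymm hPd (le_natDegree_of_ne_zero (by rwa [hlead]))
  have hrev : P.reverse = P := by
    ext k
    rw [coeff_reverse, hdeg]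
    rcases le_or_gt k (2 * K) with hk | hk
    · rw [revAt_le hk, hpal k hk]
    · rw [revAt_eq_self_of_lt hk]
  have hz : ∀ w, P.IsRoot w → w ≠ 0 ∧ P.IsRoot w⁻¹ := by
    intro w hw
    have hw0 : w ≠ 0 := by
      rintro rfl
      exact hP0 (by rw [coeff_zero_eq_eval_zero]; exact hw)
    refine ⟨hw0, ?_⟩
    let _ : Invertible w := invertibleOfNonzero hw0
    have := (eval₂_reverse_eq_zero_iff (RingHom.id ℂ) w P).2 hw
    rwa [hrev, invOf_eq_inv] at this
  have hle : ∀ w, P.IsRoot w → ‖w‖ ≤ 1 := by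
    by_contra! hcon
    obtain ⟨w₁, hw₁, hw₁n⟩ := hcon
    obtain ⟨w₀, hw₀m, hmax⟩ := P.roots.toFinset.exists_max_image (fun w => ‖w‖)
      ⟨w₁, by simpa [hPne] using hw₁⟩
    have hw₀ : P.IsRoot w₀ := by simpa [hPne] using hw₀m
    have hmax' : ∀ w, P.IsRoot w → ‖w‖ ≤ ‖w₀‖ := fun w hw => hmax w (by simpa [hPne] using hw)
    have hR : 1 < ‖w₀‖ := hw₁n.trans_le (hmax' w₁ hw₁)
    have hXne : (X + 1 : ℂ[X]) ≠ 0 := by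
      simpa using X_add_C_ne_zero (1 : ℂ)
    have hX1 : (X + 1 : ℂ[X]).natDegree = 1 := by
      simpa using natDegree_X_add_C (1 : ℂ)
    have hX1' : (X - 1 : ℂ[X]).natDegree = 1 := by
      simpa using natDegree_X_sub_C (1 : ℂ)
    have hbal : EdgeBalanced (2 * K + 1) ‖w₀‖ ((X + 1) * P) := by
      have hc : ((X + 1) * P).coeff (2 * K + 1) = P.coeff (2 * K) := by
        rw [add_mul, one_mul, coeff_add, coeff_X_mul, coeff_eq_zero_of_natDegree_lt (n := 2 * K + 1)
          (by omega), add_zero]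
      have hc0 : ((X + 1) * P).coeff 0 = P.coeff 0 := by
        rw [add_mul, one_mul, coeff_add]; simp
      refine ⟨?_, ?_, ?_, ?_⟩
      · rw [natDegree_mul hXne hPne, hX1, hdeg]; omega
      · rw [hc, hlead]; exact hP0
      · rw [hc, hc0, hlead]
      · intro w hw
        rw [IsRoot, eval_mul, mul_eq_zero] at hw
        rcases hw with hw | hw
        · have : w = -1 := by
            simp at hw; linear_combination hw
          rw [this]; simpa using hR.le
        · exact hmax' w hw
    have hgne : g ≠ 0 := by rintro rfl; simp at hgd
    have hgs : Splits g := IsAlgClosed.splits g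
    obtain ⟨l, hl⟩ := Quot.exists_rep g.roots
    have hl' : g.roots = (l : Multiset ℂ) := hl.symm
    have hlen : 0 < l.length := by
      have := hgs.natDegree_eq_card_roots
      rw [hl', Multiset.coe_card] at this
      omega
    obtain ⟨-, hmult, hcoef⟩ := hbal.foldr (by omega) hR l (fun r hr => by
      apply hg
      rw [← mem_roots hgne, hl']
      exact hr)
    set F := l.foldr (fun r P => eulerOp (((2 * K + 1 : ℕ) : ℂ) / 2 + r) P) ((X + 1) * P) with hF
    -- The equation `g(ϑ)[(w + 1)P] = N(w - 1)P`, with `g(ϑ)` split into linear factors.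
    have heq : C g.leadingCoeff * F = C N * ((X - 1) * P) := by
      ext k
      rw [coeff_C_mul, coeff_C_mul, hcoef]
      rcases le_or_gt k (2 * K + 1) with hk | hk
      · rw [← hrec k hk, hgs.eval_eq_prod_roots, hl', ← mul_assoc]
        simp
      · rw [coeff_eq_zero_of_natDegree_lt (p := (X + 1) * P),
          coeff_eq_zero_of_natDegree_lt (p := (X - 1) * P)]
        · simp
        · exact natDegree_mul_le.trans_lt (by omega)
        · exact natDegree_mul_le.trans_lt (by omega)
    have m0 : 0 < P.rootMultiplicity w₀ := (rootMultiplicity_pos hPne).2 hw₀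
    have hne1 : w₀ ≠ 1 := by rintro rfl; simp at hR
    have hne2 : w₀ ≠ -1 := by rintro rfl; simp at hR
    have mC : ∀ (c : ℂ) (A : ℂ[X]), c ≠ 0 → A ≠ 0 →
        (C c * A).rootMultiplicity w₀ = A.rootMultiplicity w₀ := by
      intro c A hc hA
      rw [rootMultiplicity_mul (mul_ne_zero (C_ne_zero.2 hc) hA), rootMultiplicity_C, zero_add]
    have hX2 : (X - 1 : ℂ[X]) ≠ 0 := by
      simpa using X_sub_C_ne_zero (1 : ℂ)
    have hR0 : C N * ((X - 1) * P) ≠ 0 := mul_ne_zero (C_ne_zero.2 hN) (mul_ne_zero hX2 hPne)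
    have hF0 : F ≠ 0 := by
      intro h; rw [h, mul_zero] at heq; exact hR0 heq.symm
    -- The multiplicity of `w₀` drops by `l.length ≥ 1` on the left and is unchanged on the right.
    have := congrArg (rootMultiplicity w₀) heq
    rw [mC _ _ (leadingCoeff_ne_zero.2 hgne) hF0, mC _ _ hN (mul_ne_zero hX2 hPne),
      hmult w₀ rfl, rootMultiplicity_mul (mul_ne_zero hX2 hPne),
      rootMultiplicity_mul (mul_ne_zero hXne hPne),
      rootMultiplicity_eq_zero (p := X - 1) (by simpa [IsRoot, sub_eq_zero] using hne1),
      rootMultiplicity_eq_zero (p := X + 1) (by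
        simpa [IsRoot, add_eq_zero_iff_eq_neg] using hne2)] at this
    omega
  obtain ⟨hw0, hwi⟩ := hz w hw
  have h1 := hle w hw
  have h2 := hle _ hwi
  rw [norm_inv] at h2
  exact le_antisymm h1 ((inv_le_one₀ (norm_pos_iff.2 hw0)).1 h2)

/-! ### Fourier integrals and limits of kernels -/

/-- The Fourier integral `∫ φ(t) e^{izt} dt` at a complex argument `z`. -/
noncomputable def fourierC (φ : ℝ → ℝ) (z : ℂ) : ℂ :=
  ∫ t : ℝ, (φ t : ℂ) * Complex.exp (Complex.I * z * t)

/-- All complex zeros of the Fourier integral of `φ` are real. -/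
def HasRealZeros (φ : ℝ → ℝ) : Prop := ∀ z : ℂ, fourierC φ z = 0 → z.im = 0

lemma norm_exp_I_mul_le {B : ℝ} {z : ℂ} (hz : ‖z‖ ≤ B) (t : ℝ) :
    ‖Complex.exp (Complex.I * z * t)‖ ≤ Real.exp (B * |t|) := by
  rw [Complex.norm_exp]
  refine Real.exp_le_exp.2 ?_
  calc (Complex.I * z * t).re ≤ ‖Complex.I * z * t‖ := Complex.re_le_norm _
    _ = ‖z‖ * |t| := by simp
    _ ≤ B * |t| := by gcongr

lemma integrable_gauss_mul_exp {c : ℝ} (hc : 0 < c) (C B : ℝ) :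
    Integrable (fun t : ℝ => C * Real.exp (-c * t ^ 2) * Real.exp (B * |t|)) := by
  have h1 : Integrable (fun t : ℝ => |C| * Real.exp (B ^ 2 / (2 * c)) *
      Real.exp (-(c / 2) * t ^ 2)) :=
    (integrable_exp_neg_mul_sq (by positivity : 0 < c / 2)).const_mul _
  refine h1.mono' (by fun_prop) (Eventually.of_forall fun t => ?_)
  rw [norm_mul, norm_mul, Real.norm_eq_abs, Real.norm_eq_abs, Real.norm_eq_abs, Real.abs_exp,
    Real.abs_exp, mul_assoc, mul_assoc, ← Real.exp_add, ← Real.exp_add]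
  refine mul_le_mul_of_nonneg_left (Real.exp_le_exp.2 ?_) (abs_nonneg C)
  have h3 : 0 ≤ (c * |t| - B) ^ 2 / (2 * c) := by positivity
  have h4 : (c * |t| - B) ^ 2 / (2 * c) = c / 2 * |t| ^ 2 - B * |t| + B ^ 2 / (2 * c) := by
    field_simp
    ring
  rw [h4, sq_abs] at h3
  linarith

lemma integrable_fourier_integrand {φ : ℝ → ℝ} {C c : ℝ} (hc : 0 < c)
    (hm : AEStronglyMeasurable φ) (hb : ∀ t, |φ t| ≤ C * Real.exp (-c * t ^ 2)) (z : ℂ) :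
    Integrable (fun t : ℝ => (φ t : ℂ) * Complex.exp (Complex.I * z * t)) := by
  refine (integrable_gauss_mul_exp hc C ‖z‖).mono'
    ((Complex.continuous_ofReal.comp_aestronglyMeasurable hm).mul (by fun_prop))
    (Eventually.of_forall fun t => ?_)
  rw [norm_mul, Complex.norm_real]
  exact mul_le_mul (hb t) (norm_exp_I_mul_le le_rfl t) (norm_nonneg _)
    ((abs_nonneg _).trans (hb t))

lemma differentiable_fourierC {φ : ℝ → ℝ} {C c : ℝ} (hc : 0 < c)
    (hm : AEStronglyMeasurable φ) (hb : ∀ t, |φ t| ≤ C * Real.exp (-c * t ^ 2)) :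
    Differentiable ℂ (fourierC φ) := by
  intro z₀
  have hm' : AEStronglyMeasurable (fun t : ℝ => (φ t : ℂ)) :=
    Complex.continuous_ofReal.comp_aestronglyMeasurable hm
  refine (hasDerivAt_integral_of_dominated_loc_of_deriv_le (𝕜 := ℂ)
    (F := fun z t => (φ t : ℂ) * Complex.exp (Complex.I * z * t))
    (F' := fun z t => (φ t : ℂ) * (Complex.exp (Complex.I * z * t) * (Complex.I * t)))
    (bound := fun t => C * Real.exp (-c * t ^ 2) * Real.exp ((‖z₀‖ + 2) * |t|))
    (Metric.ball_mem_nhds z₀ one_pos) ?_ ?_ ?_ ?_ ?_ ?_).2.differentiableAt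
  · exact Eventually.of_forall fun z => hm'.mul (by fun_prop)
  · exact integrable_fourier_integrand hc hm hb z₀
  · exact hm'.mul (by fun_prop)
  · refine Eventually.of_forall fun t z hz => ?_
    have hz' : ‖z‖ ≤ ‖z₀‖ + 1 := by
      have h1 : ‖z - z₀‖ < 1 := by simpa [dist_eq_norm] using hz
      have h2 := norm_add_le z₀ (z - z₀)
      rw [add_sub_cancel] at h2
      linarith
    rw [norm_mul, norm_mul, Complex.norm_real]
    refine mul_le_mul (hb t) ?_ (by positivity) ((abs_nonneg _).trans (hb t))
    have h3 : ‖Complex.I * (t : ℂ)‖ ≤ Real.exp |t| := by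
      simp only [norm_mul, Complex.norm_I, one_mul, Complex.norm_real, Real.norm_eq_abs]
      linarith [Real.add_one_le_exp |t|]
    calc _ ≤ Real.exp ((‖z₀‖ + 1) * |t|) * Real.exp |t| :=
          mul_le_mul (norm_exp_I_mul_le hz' t) h3 (norm_nonneg _) (Real.exp_pos _).le
      _ = _ := by rw [← Real.exp_add]; congr 1; ring
  · exact integrable_gauss_mul_exp hc C _
  · refine Eventually.of_forall fun t z _ => ?_
    have h1 : HasDerivAt (fun z : ℂ => Complex.I * z * t) (Complex.I * t) z := by
      simpa using ((hasDerivAt_id z).const_mul Complex.I).mul_const (t : ℂ)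
    exact h1.cexp.const_mul _

lemma fourierC_zero_ne_zero {φ : ℝ → ℝ} {C c : ℝ} (hc : 0 < c)
    (hm : AEStronglyMeasurable φ) (hb : ∀ t, |φ t| ≤ C * Real.exp (-c * t ^ 2))
    (hpos : ∀ t, 0 < φ t) : fourierC φ 0 ≠ 0 := by
  have hint : Integrable φ := by
    refine ((integrable_exp_neg_mul_sq hc).const_mul C).mono' hm (Eventually.of_forall hb)
  have h : fourierC φ 0 = ((∫ t, φ t : ℝ) : ℂ) := by
    unfold fourierC
    simp only [mul_zero, zero_mul, Complex.exp_zero, mul_one]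
    exact integral_ofReal
  rw [h, Complex.ofReal_ne_zero]
  refine ((integral_pos_iff_support_of_nonneg (fun t => (hpos t).le) hint).2 ?_).ne'
  have : Function.support φ = Set.univ := Set.eq_univ_of_forall fun t => (hpos t).ne'
  rw [this]
  simp

/-- Having only real zeros passes to pointwise limits under a Gaussian bound. The Fourier integrals
converge uniformly on discs by dominated convergence; a nonreal zero `z₀` of the limit is excluded by
the maximum principle for the reciprocals of the approximants on a small disc around `z₀`. -/
theorem HasRealZeros.of_tendsto {φ : ℕ → ℝ → ℝ} {ψ : ℝ → ℝ} {C c : ℝ} (hc : 0 < c)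
    (hm : ∀ n, AEStronglyMeasurable (φ n))
    (hb : ∀ n t, |φ n t| ≤ C * Real.exp (-c * t ^ 2))
    (hlim : ∀ t, Tendsto (fun n => φ n t) atTop (𝓝 (ψ t)))
    (hreal : ∀ n, HasRealZeros (φ n)) (hpos : ∀ t, 0 < ψ t) : HasRealZeros ψ := by
  have hmψ : AEStronglyMeasurable ψ :=
    aestronglyMeasurable_of_tendsto_ae atTop hm (Eventually.of_forall hlim)
  have hbψ : ∀ t, |ψ t| ≤ C * Real.exp (-c * t ^ 2) := fun t =>
    le_of_tendsto (hlim t).abs (Eventually.of_forall fun n => hb n t)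
  have hne : fourierC ψ 0 ≠ 0 := fourierC_zero_ne_zero hc hmψ hbψ hpos
  have hdψ : Differentiable ℂ (fourierC ψ) := differentiable_fourierC hc hmψ hbψ
  have hdφ : ∀ n, Differentiable ℂ (fourierC (φ n)) := fun n =>
    differentiable_fourierC hc (hm n) (hb n)
  intro z₀ hz₀
  by_contra him
  have hiso : ∀ᶠ z in 𝓝[≠] z₀, fourierC ψ z ≠ 0 := by
    have han : AnalyticOnNhd ℂ (fourierC ψ) Set.univ :=
      fun z _ => hdψ.analyticAt z
    rcases (han z₀ (Set.mem_univ _)).eventually_eq_zero_or_eventually_ne_zero with h | h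
    · exact absurd (han.eqOn_zero_of_preconnected_of_eventuallyEq_zero isPreconnected_univ
        (Set.mem_univ z₀) h (Set.mem_univ 0)) hne
    · exact h
  have him' : ∀ᶠ z : ℂ in 𝓝 z₀, z.im ≠ 0 :=
    Complex.continuous_im.continuousAt.eventually_ne him
  have hboth := (eventually_nhdsWithin_iff.1 hiso).and him'
  obtain ⟨r₀, hr₀, hball⟩ := Metric.eventually_nhds_iff_ball.1 hboth
  set r := r₀ / 2 with hr
  have hrpos : 0 < r := by positivity
  have hsub : ∀ z ∈ Metric.closedBall z₀ r, z ∈ Metric.ball z₀ r₀ := fun z hz => by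
    rw [Metric.mem_closedBall] at hz; rw [Metric.mem_ball]; linarith
  obtain ⟨y, hy, hymin⟩ := (isCompact_sphere z₀ r).exists_isMinOn
    (NormedSpace.sphere_nonempty.2 hrpos.le) (hdψ.continuous.norm.continuousOn)
  set δ := ‖fourierC ψ y‖ with hδ
  have hδpos : 0 < δ := by
    refine norm_pos_iff.2 ((hball y (hsub y (Metric.sphere_subset_closedBall hy))).1 ?_)
    rintro rfl
    rw [Metric.mem_sphere, dist_self] at hy
    linarith
  -- On the ball `‖z‖ ≤ B`, so this integral bounds the difference of the Fourier integrals there.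
  set B := ‖z₀‖ + r with hB
  have htend : Tendsto (fun n => ∫ t : ℝ, |φ n t - ψ t| * Real.exp (B * |t|)) atTop (𝓝 0) := by
    rw [show (0 : ℝ) = ∫ _ : ℝ, (0 : ℝ) by simp]
    refine tendsto_integral_of_dominated_convergence
      (fun t => 2 * C * Real.exp (-c * t ^ 2) * Real.exp (B * |t|)) (fun n => ?_)
      (integrable_gauss_mul_exp hc _ _) (fun n => Eventually.of_forall fun t => ?_)
      (Eventually.of_forall fun t => ?_)
    · exact ((continuous_abs.comp_aestronglyMeasurable ((hm n).sub hmψ))).mul (by fun_prop)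
    · rw [norm_mul, Real.norm_eq_abs, Real.norm_eq_abs, abs_abs, Real.abs_exp]
      gcongr
      calc |φ n t - ψ t| ≤ |φ n t| + |ψ t| := abs_sub _ _
        _ ≤ _ := by linarith [hb n t, hbψ t]
    · have := ((hlim t).sub_const (ψ t)).abs.mul_const (Real.exp (B * |t|))
      simpa using this
  obtain ⟨n, hn⟩ := (htend.eventually (gt_mem_nhds (half_pos hδpos))).exists
  have hclose : ∀ z ∈ Metric.closedBall z₀ r, ‖fourierC (φ n) z - fourierC ψ z‖ < δ / 2 := by
    intro z hz
    have hzB : ‖z‖ ≤ B := by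
      have h1 : ‖z - z₀‖ ≤ r := by simpa [dist_eq_norm] using hz
      have h2 := norm_add_le z₀ (z - z₀)
      rw [add_sub_cancel] at h2
      linarith
    refine lt_of_le_of_lt ?_ hn
    unfold fourierC
    rw [← integral_sub (integrable_fourier_integrand hc (hm n) (hb n) z)
      (integrable_fourier_integrand hc hmψ hbψ z)]
    refine norm_integral_le_of_norm_le ?_ (Eventually.of_forall fun t => ?_)
    · refine (integrable_gauss_mul_exp hc (2 * C) B).mono'
        (((continuous_abs.comp_aestronglyMeasurable ((hm n).sub hmψ))).mul (by fun_prop))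
        (Eventually.of_forall fun t => ?_)
      rw [norm_mul, Real.norm_eq_abs, Real.norm_eq_abs, abs_abs, Real.abs_exp]
      gcongr
      calc |φ n t - ψ t| ≤ |φ n t| + |ψ t| := abs_sub _ _
        _ ≤ _ := by linarith [hb n t, hbψ t]
    · rw [← sub_mul, norm_mul, ← Complex.ofReal_sub, Complex.norm_real, Real.norm_eq_abs]
      gcongr
      exact norm_exp_I_mul_le hzB t
  have hnz : ∀ z ∈ Metric.closedBall z₀ r, fourierC (φ n) z ≠ 0 := fun z hz h0 =>
    (hball z (hsub z hz)).2 (hreal n z h0)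
  have hdc : DiffContOnCl ℂ (fun z => (fourierC (φ n) z)⁻¹) (Metric.ball z₀ r) := by
    refine DiffContOnCl.inv (hdφ n).diffContOnCl fun z hz => ?_
    rw [closure_ball _ hrpos.ne'] at hz
    exact hnz z hz
  have hmaxp := Complex.norm_le_of_forall_mem_frontier_norm_le (C := (δ / 2)⁻¹)
    Metric.isBounded_ball hdc (fun z hz => by
      rw [frontier_ball _ hrpos.ne'] at hz
      rw [norm_inv]
      refine inv_anti₀ (half_pos hδpos) ?_
      have h1 : δ ≤ ‖fourierC ψ z‖ := hymin hz
      have h2 := hclose z (Metric.sphere_subset_closedBall hz)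
      have h3 := norm_sub_norm_le (fourierC ψ z) (fourierC (φ n) z)
      rw [norm_sub_rev] at h3
      linarith) (subset_closure (Metric.mem_ball_self hrpos))
  have h5 := hclose z₀ (Metric.mem_closedBall_self hrpos.le)
  rw [hz₀, sub_zero] at h5
  rw [norm_inv] at hmaxp
  have h6 : 0 < ‖fourierC (φ n) z₀‖ :=
    norm_pos_iff.2 (hnz z₀ (Metric.mem_closedBall_self hrpos.le))
  have := (inv_le_inv₀ h6 (half_pos hδpos)).1 hmaxp
  linarith

/-! ### Step kernels -/

/-- An even `q` with `q 0 = 0`, whose derivative `d` is continuous, strictly increasing on `[0, ∞)`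
and of at least linear growth. -/
structure IsPotential (q d : ℝ → ℝ) : Prop where
  hasDerivAt : ∀ t, HasDerivAt q (d t) t
  zero : q 0 = 0
  even : ∀ t, q (-t) = q t
  cont : Continuous d
  strictMono : StrictMonoOn d (Set.Ici 0)
  coercive : ∃ a > 0, ∀ t, 0 ≤ t → a * (t - 1) ≤ d t

namespace IsPotential

variable {q d : ℝ → ℝ}

lemma deriv_odd (H : IsPotential q d) (t : ℝ) : d (-t) = -d t := by
  have h1 : HasDerivAt (fun s => q (-s)) (-d (-t)) t := by
    have h0 := (H.hasDerivAt (-t)).comp t (hasDerivAt_neg t)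
    rw [mul_neg_one] at h0
    exact h0
  have h2 : (fun s => q (-s)) = q := funext H.even
  rw [h2] at h1
  linarith [h1.unique (H.hasDerivAt t)]

lemma deriv_zero (H : IsPotential q d) : d 0 = 0 := by
  have := H.deriv_odd 0
  rw [neg_zero] at this
  linarith

lemma deriv_mono (H : IsPotential q d) {s t : ℝ} (hs : 0 ≤ s) (hst : s ≤ t) : d s ≤ d t :=
  H.strictMono.monotoneOn hs (hs.trans hst) hst

lemma deriv_nonneg (H : IsPotential q d) {t : ℝ} (ht : 0 ≤ t) : 0 ≤ d t :=
  H.deriv_zero ▸ H.deriv_mono le_rfl ht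

lemma sub_bounds (H : IsPotential q d) {s t : ℝ} (hs : 0 ≤ s) (hst : s < t) :
    (t - s) * d s ≤ q t - q s ∧ q t - q s ≤ (t - s) * d t := by
  obtain ⟨c, hc, he⟩ := exists_hasDerivAt_eq_slope q d hst
    (fun x _ => (H.hasDerivAt x).continuousAt.continuousWithinAt) (fun x _ => H.hasDerivAt x)
  have hts : 0 < t - s := sub_pos.2 hst
  have he' : q t - q s = (t - s) * d c := by
    rw [he]; field_simp
  rw [he']
  exact ⟨mul_le_mul_of_nonneg_left (H.deriv_mono hs hc.1.le) hts.le,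
    mul_le_mul_of_nonneg_left (H.deriv_mono (hs.trans hc.1.le) hc.2.le) hts.le⟩

end IsPotential

/-- The number `x_j = (h/2) q'((j + 1/2)h)`, half the approximate increment of `q` over
`[jh, (j+1)h]`. -/
noncomputable def midSlope (d : ℝ → ℝ) (h : ℝ) (j : ℕ) : ℝ := h / 2 * d (((j : ℝ) + 1 / 2) * h)

/-- The weight `p_k = ∏_{j<k} (1 - x_j)/(1 + x_j)`, approximating `e^{-q(kh)}`. -/
noncomputable def stepWeight (d : ℝ → ℝ) (h : ℝ) (k : ℕ) : ℝ :=
  ∏ j ∈ Finset.range k, (1 - midSlope d h j) / (1 + midSlope d h j)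

/-- The even step function (up to its jumps) with value `p_{|i|}` on the cell
`[(i - 1/2)h, (i + 1/2)h)`. -/
noncomputable def stepKernel (d : ℝ → ℝ) (h : ℝ) (t : ℝ) : ℝ :=
  stepWeight d h (round (t / h)).natAbs

section Step

variable {q d : ℝ → ℝ} {h : ℝ} {K : ℕ}

lemma midSlope_nonneg (H : IsPotential q d) (hh : 0 < h) (j : ℕ) : 0 ≤ midSlope d h j :=
  mul_nonneg (by positivity) (H.deriv_nonneg (by positivity))

lemma midSlope_lt_one (H : IsPotential q d) (hh : 0 < h) (hK : midSlope d h K = 1) {j : ℕ}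
    (hj : j < K) : midSlope d h j < 1 := by
  rw [← hK]
  unfold midSlope
  have hjK : (j : ℝ) < K := by exact_mod_cast hj
  refine mul_lt_mul_of_pos_left (H.strictMono ?_ ?_ ?_) (by positivity)
  · exact Set.mem_Ici.2 (by positivity)
  · exact Set.mem_Ici.2 (by positivity)
  · gcongr

lemma stepWeight_pos (H : IsPotential q d) (hh : 0 < h) (hK : midSlope d h K = 1) {k : ℕ}
    (hk : k ≤ K) : 0 < stepWeight d h k := by
  refine Finset.prod_pos fun j hj => ?_
  have h1 := midSlope_lt_one H hh hK ((Finset.mem_range.1 hj).trans_le hk)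
  have h2 := midSlope_nonneg H hh j
  exact div_pos (by linarith) (by linarith)

lemma stepWeight_eq_zero (hK : midSlope d h K = 1) {k : ℕ} (hk : K < k) :
    stepWeight d h k = 0 :=
  Finset.prod_eq_zero (Finset.mem_range.2 hk) (by simp [hK])

lemma stepWeight_nonneg (H : IsPotential q d) (hh : 0 < h) (hK : midSlope d h K = 1) (k : ℕ) :
    0 ≤ stepWeight d h k := by
  rcases le_or_gt k K with hk | hk
  · exact (stepWeight_pos H hh hK hk).le
  · rw [stepWeight_eq_zero hK hk]

lemma stepWeight_succ (H : IsPotential q d) (hh : 0 < h) (k : ℕ) :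
    stepWeight d h (k + 1) * (1 + midSlope d h k) = stepWeight d h k * (1 - midSlope d h k) := by
  have := midSlope_nonneg H hh k
  unfold stepWeight
  rw [Finset.prod_range_succ]
  field_simp

/-- The recursion for the two-sided sequence `i ↦ p_{|i|}`, valid for all integers `i` because `d` is
odd. -/
lemma stepWeight_rec (H : IsPotential q d) (hh : 0 < h) (i : ℤ) :
    h / 2 * d (h * ((i : ℝ) - 1 / 2)) * (stepWeight d h i.natAbs + stepWeight d h (i - 1).natAbs)
      = stepWeight d h (i - 1).natAbs - stepWeight d h i.natAbs := by
  rcases lt_or_ge 0 i with hi | hi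
  · obtain ⟨n, rfl⟩ : ∃ n : ℕ, i = n + 1 := ⟨(i - 1).toNat, by omega⟩
    have e1 : ((n : ℤ) + 1).natAbs = n + 1 := by omega
    have e2 : ((n : ℤ) + 1 - 1).natAbs = n := by omega
    have e3 : h / 2 * d (h * ((((n : ℤ) + 1 : ℤ) : ℝ) - 1 / 2)) = midSlope d h n := by
      unfold midSlope; push_cast; congr 2; ring
    rw [e1, e2, e3]
    linear_combination stepWeight_succ H hh n
  · obtain ⟨n, rfl⟩ : ∃ n : ℕ, i = -n := ⟨(-i).toNat, by omega⟩
    have e1 : (-(n : ℤ)).natAbs = n := by omega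
    have e2 : (-(n : ℤ) - 1).natAbs = n + 1 := by omega
    have e3 : h / 2 * d (h * (((-(n : ℤ) : ℤ) : ℝ) - 1 / 2)) = -midSlope d h n := by
      unfold midSlope
      rw [show h * (((-(n : ℤ) : ℤ) : ℝ) - 1 / 2) = -(((n : ℝ) + 1 / 2) * h) by push_cast; ring,
        H.deriv_odd]
      ring
    rw [e1, e2, e3]
    linear_combination -stepWeight_succ H hh n

/-- The polynomial `∑_{|i| ≤ K} p_{|i|} w^{i+K}`. -/
noncomputable def stepPoly (d : ℝ → ℝ) (h : ℝ) (K : ℕ) : ℂ[X] :=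
  ∑ k ∈ Finset.range (2 * K + 1), C (stepWeight d h ((k : ℤ) - K).natAbs : ℂ) * X ^ k

lemma coeff_stepPoly (hK : midSlope d h K = 1) (k : ℕ) :
    (stepPoly d h K).coeff k = (stepWeight d h ((k : ℤ) - K).natAbs : ℂ) := by
  unfold stepPoly
  simp only [finsetSum_coeff, coeff_C_mul, coeff_X_pow, mul_ite, mul_one, mul_zero]
  rw [Finset.sum_ite_eq]
  split_ifs with hk
  · rfl
  · rw [stepWeight_eq_zero hK, Complex.ofReal_zero]
    rw [Finset.mem_range] at hk
    omega

lemma norm_root_stepPoly (H : IsPotential q d) (hh : 0 < h) (hK : midSlope d h K = 1)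
    {D : ℂ[X]} (hD : ∀ t : ℝ, D.eval (t : ℂ) = (d t : ℂ)) (hDd : 0 < D.natDegree)
    (hDr : ∀ r, D.IsRoot r → r.re = 0) {w : ℂ} (hw : (stepPoly d h K).IsRoot w) : ‖w‖ = 1 := by
  have hhC : (h : ℂ) ≠ 0 := Complex.ofReal_ne_zero.2 hh.ne'
  refine norm_root_eq_one (K := K) (g := C ((h : ℂ) / 2) * D.comp (C (h : ℂ) * X)) (N := 1)
    one_ne_zero ?_ ?_ ?_ ?_ ?_ ?_ hw
  · intro r hr
    have h1 : D.eval ((h : ℂ) * r) = 0 := by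
      simpa [IsRoot, hhC] using hr
    have := hDr _ h1
    simpa [hh.ne'] using this
  · rw [natDegree_C_mul (by simpa using hhC), natDegree_comp, natDegree_C_mul_X _ hhC, mul_one]
    exact hDd
  · rw [coeff_stepPoly hK, Complex.ofReal_ne_zero]
    exact (stepWeight_pos H hh hK (by omega)).ne'
  · rw [natDegree_le_iff_coeff_eq_zero]
    intro k hk
    rw [coeff_stepPoly hK, stepWeight_eq_zero hK (by omega), Complex.ofReal_zero]
  · intro k hk
    rw [coeff_stepPoly hK, coeff_stepPoly hK]
    congr 2
    omega
  · intro k _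
    have hshift : (X * stepPoly d h K).coeff k = (stepWeight d h ((k : ℤ) - K - 1).natAbs : ℂ) := by
      cases k with
      | zero =>
        -- The coefficient at the fictitious index `-K - 1` vanishes since `x_K = 1`.
        rw [stepWeight_eq_zero hK (by omega)]; simp
      | succ n =>
        rw [coeff_X_mul, coeff_stepPoly hK]
        congr 3
        push_cast; ring
    have hev : (C ((h : ℂ) / 2) * D.comp (C (h : ℂ) * X)).eval
        ((k : ℂ) - ((2 * K + 1 : ℕ) : ℂ) / 2) =
        ((h / 2 * d (h * ((((k : ℤ) - K : ℤ) : ℝ) - 1 / 2)) : ℝ) : ℂ) := by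
      rw [eval_mul, eval_C, eval_comp, eval_mul, eval_C, eval_X]
      push_cast
      rw [← hD]
      congr 2
      push_cast
      ring
    have hr := stepWeight_rec H hh ((k : ℤ) - K)
    rw [hev, add_mul, sub_mul, one_mul, coeff_add, coeff_sub, hshift, coeff_stepPoly hK, one_mul]
    rw [← Complex.ofReal_add, ← Complex.ofReal_mul, ← Complex.ofReal_sub, ← hr]
    congr 1
    ring

lemma measurable_stepKernel (d : ℝ → ℝ) (h : ℝ) : Measurable (stepKernel d h) := by
  have h1 : Measurable (fun i : ℤ => stepWeight d h i.natAbs) := measurable_of_countable _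
  have h2 : Measurable (fun t : ℝ => round (t / h)) := by
    simp only [round_eq]
    exact Int.measurable_floor.comp (by fun_prop)
  exact h1.comp h2

/-- The indicator function of the cell `[-h/2, h/2)`. -/
noncomputable def cell (h : ℝ) : ℝ → ℝ := (Set.Ico (-(h / 2)) (h / 2)).indicator 1

lemma round_div_eq_iff (hh : 0 < h) (t : ℝ) (i : ℤ) :
    round (t / h) = i ↔ t - i * h ∈ Set.Ico (-(h / 2)) (h / 2) := by
  rw [round_eq, Int.floor_eq_iff, Set.mem_Ico]
  have e : t / h + 1 / 2 = (t + h / 2) / h := by field_simp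
  rw [e, le_div_iff₀ hh, div_lt_iff₀ hh]
  constructor <;> rintro ⟨h1, h2⟩ <;> constructor <;> linarith

lemma stepKernel_eq_sum (hh : 0 < h) (hK : midSlope d h K = 1) (t : ℝ) :
    stepKernel d h t = ∑ k ∈ Finset.range (2 * K + 1),
      stepWeight d h ((k : ℤ) - K).natAbs * cell h (t - (((k : ℤ) - K : ℤ) : ℝ) * h) := by
  have hcell : ∀ k : ℕ, cell h (t - (((k : ℤ) - K : ℤ) : ℝ) * h) =
      if round (t / h) = (k : ℤ) - K then 1 else 0 := by
    intro k
    unfold cell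
    rw [Set.indicator_apply]
    simp only [round_div_eq_iff hh, Pi.one_apply]
  simp only [hcell, mul_ite, mul_one, mul_zero]
  unfold stepKernel
  rcases le_or_gt (round (t / h)).natAbs K with hr | hr
  · rw [Finset.sum_eq_single (round (t / h) + K).toNat]
    · rw [if_pos (by omega)]
      congr 2
      omega
    · intro k _ hk
      rw [if_neg (by omega)]
    · intro hk
      rw [Finset.mem_range] at hk
      omega
  · rw [stepWeight_eq_zero hK hr, Finset.sum_eq_zero]
    intro k hk
    rw [Finset.mem_range] at hk
    rw [if_neg (by omega)]

lemma fourierC_cell (h : ℝ) (hh : 0 < h) (z : ℂ) :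
    fourierC (cell h) z = ∫ t in (-(h / 2))..(h / 2), Complex.exp (Complex.I * z * t) := by
  rw [intervalIntegral.integral_of_le (by linarith), ← integral_Ico_eq_integral_Ioc,
    ← integral_indicator measurableSet_Ico]
  unfold fourierC cell
  congr 1
  ext t
  by_cases ht : t ∈ Set.Ico (-(h / 2)) (h / 2) <;> simp [ht]

lemma hasRealZeros_cell (hh : 0 < h) : HasRealZeros (cell h) := by
  intro z hz
  by_cases hz0 : z = 0
  · simp [hz0]
  rw [fourierC_cell h hh, integral_exp_mul_complex (mul_ne_zero Complex.I_ne_zero hz0),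
    div_eq_zero_iff, or_iff_left (mul_ne_zero Complex.I_ne_zero hz0), sub_eq_zero] at hz
  have h1 := congrArg norm hz
  rw [Complex.norm_exp, Complex.norm_exp, Real.exp_eq_exp] at h1
  simp at h1
  have h2 : z.im * h = 0 := by linarith
  exact (mul_eq_zero.1 h2).resolve_right hh.ne'

lemma abs_cell_le (hh : 0 < h) (t : ℝ) :
    |cell h t| ≤ Real.exp (h ^ 2) * Real.exp (-1 * t ^ 2) := by
  unfold cell
  by_cases ht : t ∈ Set.Ico (-(h / 2)) (h / 2)
  · rw [Set.indicator_of_mem ht, ← Real.exp_add]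
    simp only [Pi.one_apply, abs_one]
    rw [Real.one_le_exp_iff]
    nlinarith [ht.1, ht.2]
  · rw [Set.indicator_of_notMem ht, abs_zero]
    positivity

lemma integrable_cell (hh : 0 < h) (z : ℂ) :
    Integrable (fun t : ℝ => (cell h t : ℂ) * Complex.exp (Complex.I * z * t)) :=
  integrable_fourier_integrand one_pos
    ((measurable_one.indicator measurableSet_Ico).aestronglyMeasurable) (abs_cell_le hh) z

lemma fourierC_stepKernel (hh : 0 < h) (hK : midSlope d h K = 1) (z : ℂ) :
    fourierC (stepKernel d h) z = Complex.exp (-(K * (Complex.I * z * h))) *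
      (stepPoly d h K).eval (Complex.exp (Complex.I * z * h)) * fourierC (cell h) z := by
  have key : ∀ s : ℝ, ∀ t : ℝ, (cell h (t - s) : ℂ) * Complex.exp (Complex.I * z * t) =
      Complex.exp (Complex.I * z * s) * ((cell h (t - s) : ℂ) *
        Complex.exp (Complex.I * z * ((t - s : ℝ) : ℂ))) := by
    intro s t
    rw [mul_left_comm, ← Complex.exp_add]
    congr 2
    push_cast
    ring
  have hint : ∀ s : ℝ, Integrable fun t : ℝ =>
      (cell h (t - s) : ℂ) * Complex.exp (Complex.I * z * t) := by
    intro s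
    simp only [key s]
    exact ((integrable_cell hh z).comp_sub_right s).const_mul _
  have hval : ∀ s : ℝ, ∫ t : ℝ, (cell h (t - s) : ℂ) * Complex.exp (Complex.I * z * t) =
      Complex.exp (Complex.I * z * s) * fourierC (cell h) z := by
    intro s
    simp only [key s]
    rw [integral_const_mul]
    congr 1
    exact integral_sub_right_eq_self
      (fun t : ℝ => (cell h t : ℂ) * Complex.exp (Complex.I * z * t)) s
  unfold fourierC at *
  simp only [stepKernel_eq_sum hh hK, Complex.ofReal_sum, Complex.ofReal_mul, Finset.sum_mul,
    mul_assoc (Complex.ofReal (stepWeight _ _ _))]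
  rw [integral_finsetSum _ (fun k _ => (hint _).const_mul _)]
  simp only [integral_const_mul, hval]
  unfold stepPoly
  rw [eval_finsetSum, Finset.mul_sum, Finset.sum_mul]
  refine Finset.sum_congr rfl fun k _ => ?_
  rw [eval_mul, eval_C, eval_pow, eval_X, ← Complex.exp_nat_mul]
  have : Complex.exp (Complex.I * z * (((((k : ℤ) - K : ℤ) : ℝ) * h : ℝ) : ℂ)) =
      Complex.exp (-(K * (Complex.I * z * h))) * Complex.exp (k * (Complex.I * z * h)) := by
    rw [← Complex.exp_add]
    congr 1
    push_cast
    ring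
  rw [this]
  ring

lemma hasRealZeros_stepKernel (H : IsPotential q d) (hh : 0 < h) (hK : midSlope d h K = 1)
    {D : ℂ[X]} (hD : ∀ t : ℝ, D.eval (t : ℂ) = (d t : ℂ)) (hDd : 0 < D.natDegree)
    (hDr : ∀ r, D.IsRoot r → r.re = 0) : HasRealZeros (stepKernel d h) := by
  intro z hz
  rw [fourierC_stepKernel hh hK, mul_eq_zero, mul_eq_zero,
    or_iff_right (Complex.exp_ne_zero _)] at hz
  rcases hz with hz | hz
  · have h1 := norm_root_stepPoly H hh hK hD hDd hDr hz
    rw [Complex.norm_exp, Real.exp_eq_one_iff] at h1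
    simpa [hh.ne'] using h1
  · exact hasRealZeros_cell hh z hz

end Step

/-! ### Convergence of the step kernels -/

section Limit

variable {q d : ℝ → ℝ} {h : ℝ} {K : ℕ}

lemma abs_sub_round_mul_le (hh : 0 < h) (t : ℝ) :
    abs ((((round (t / h)).natAbs : ℕ) : ℝ) * h - |t|) ≤ h / 2 := by
  have h1 := (round_div_eq_iff hh t (round (t / h))).1 rfl
  have h2 : (((round (t / h)).natAbs : ℕ) : ℝ) * h = |(round (t / h) : ℝ) * h| := by
    rw [abs_mul, abs_of_pos hh, Nat.cast_natAbs, Int.cast_abs]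
  rw [h2]
  refine (abs_abs_sub_abs_le_abs_sub _ _).trans (abs_le.2 ⟨?_, ?_⟩)
  · linarith [h1.2]
  · linarith [h1.1]

lemma stepWeight_le (H : IsPotential q d) (hh : 0 < h) (hK : midSlope d h K = 1) {a : ℝ}
    (ha : ∀ t, 0 ≤ t → a * (t - 1) ≤ d t) (k : ℕ) (hk : k ≤ K) :
    stepWeight d h k ≤ Real.exp (-(a / 2) * ((k * h) ^ 2 / 2 - k * h)) := by
  induction k with
  | zero => simp [stepWeight]
  | succ k ih =>
    have ih := ih (by omega)
    have hx0 := midSlope_nonneg H hh k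
    have hx1 := midSlope_lt_one H hh hK (show k < K by omega)
    have hx2 : h / 2 * (a * (((k : ℝ) + 1 / 2) * h - 1)) ≤ midSlope d h k :=
      mul_le_mul_of_nonneg_left (ha _ (by positivity)) (by positivity)
    have hr : (1 - midSlope d h k) / (1 + midSlope d h k) ≤ Real.exp (-midSlope d h k) := by
      have := Real.one_sub_le_exp_neg (midSlope d h k)
      exact (div_le_self (by linarith) (by linarith)).trans this
    have hs : stepWeight d h (k + 1) =
        stepWeight d h k * ((1 - midSlope d h k) / (1 + midSlope d h k)) := by
      unfold stepWeight; rw [Finset.prod_range_succ]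
    rw [hs]
    calc _ ≤ Real.exp (-(a / 2) * ((k * h) ^ 2 / 2 - k * h)) * Real.exp (-midSlope d h k) :=
          mul_le_mul ih hr (div_nonneg (by linarith) (by linarith)) (Real.exp_pos _).le
      _ ≤ _ := by
          rw [← Real.exp_add]
          refine Real.exp_le_exp.2 ?_
          push_cast
          nlinarith

lemma abs_stepKernel_le (H : IsPotential q d) (hh : 0 < h) (hh1 : h ≤ 1)
    (hK : midSlope d h K = 1) {a : ℝ} (ha0 : 0 < a)
    (ha : ∀ t, 0 ≤ t → a * (t - 1) ≤ d t) (t : ℝ) :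
    |stepKernel d h t| ≤ Real.exp (5 * a / 8) * Real.exp (-(a / 16) * t ^ 2) := by
  unfold stepKernel
  rw [abs_of_nonneg (stepWeight_nonneg H hh hK _)]
  rcases le_or_gt (round (t / h)).natAbs K with hr | hr
  · refine (stepWeight_le H hh hK ha _ hr).trans ?_
    rw [← Real.exp_add]
    refine Real.exp_le_exp.2 ?_
    have h1 := abs_le.1 (abs_sub_round_mul_le hh t)
    set u := (((round (t / h)).natAbs : ℕ) : ℝ) * h with hu
    have hu0 : 0 ≤ u := by positivity
    have h2 : t ^ 2 ≤ (u + 1) ^ 2 := by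
      rw [← sq_abs t]
      gcongr
      linarith
    have h3 : t ^ 2 / 8 - 5 / 4 ≤ u ^ 2 / 2 - u := by
      nlinarith [sq_nonneg (u - 1), sq_nonneg (u - 2)]
    nlinarith
  · rw [stepWeight_eq_zero hK hr]
    positivity

lemma ratio_bounds {x : ℝ} (h0 : 0 ≤ x) (h1 : x ≤ 1 / 2) :
    Real.exp (-2 * x - 2 * x ^ 2) ≤ (1 - x) / (1 + x) ∧
    (1 - x) / (1 + x) ≤ Real.exp (-2 * x + 2 * x ^ 2) := by
  have hp : 0 < 1 - x := by linarith
  have hq : 0 < 1 + x := by linarith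
  rw [← Real.le_log_iff_exp_le (div_pos hp hq), ← Real.log_le_iff_le_exp (div_pos hp hq),
    Real.log_div hp.ne' hq.ne']
  have a1 := Real.one_sub_inv_le_log_of_pos hp
  have a2 := Real.log_le_sub_one_of_pos hp
  have b1 := Real.one_sub_inv_le_log_of_pos hq
  have b2 := Real.log_le_sub_one_of_pos hq
  have c1 : -x - 2 * x ^ 2 ≤ 1 - (1 - x)⁻¹ := by
    have : (1 - x)⁻¹ ≤ 1 + x + 2 * x ^ 2 := by
      rw [inv_le_iff_one_le_mul₀ hp]
      nlinarith [mul_nonneg (sq_nonneg x) (sub_nonneg.2 h1)]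
    linarith
  have c2 : x - x ^ 2 ≤ 1 - (1 + x)⁻¹ := by
    have : (1 + x)⁻¹ ≤ 1 - x + x ^ 2 := by
      rw [inv_le_iff_one_le_mul₀ hq]
      nlinarith [pow_nonneg h0 3]
    linarith
  constructor <;> nlinarith [sq_nonneg x]

/-- Comparison of `p_k` with `e^{-q(kh)}`. Since `d` is increasing, the midpoint sum of `h d` differs
from `q(kh)` by at most `h d(kh)`; the remaining error comes from `log ((1 - x)/(1 + x)) ≈ -2x`. -/
lemma stepWeight_bounds (H : IsPotential q d) (hh : 0 < h) {A : ℝ} (hA : h * d A ≤ 1)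
    (k : ℕ) (hk : k * h ≤ A) :
    Real.exp (-q (k * h) - h * d (k * h) - (k * h) * h * d A ^ 2) ≤ stepWeight d h k ∧
    stepWeight d h k ≤ Real.exp (-q (k * h) + h * d (k * h) + (k * h) * h * d A ^ 2) := by
  induction k with
  | zero => simp [stepWeight, H.zero, H.deriv_zero]
  | succ k ih =>
    push_cast at hk ⊢
    obtain ⟨ih1, ih2⟩ := ih (by nlinarith)
    have hk0 : 0 ≤ (k : ℝ) * h := by positivity
    set x := midSlope d h k with hx
    have hx0 : 0 ≤ x := midSlope_nonneg H hh k
    have hxA : x ≤ h / 2 * d A :=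
      mul_le_mul_of_nonneg_left (H.deriv_mono (by positivity) (by nlinarith)) (by positivity)
    have hxlo : h * d (k * h) ≤ 2 * x := by
      have : d (k * h) ≤ d (((k : ℝ) + 1 / 2) * h) := H.deriv_mono hk0 (by nlinarith)
      rw [hx]; unfold midSlope; nlinarith
    have hxhi : 2 * x ≤ h * d (((k : ℝ) + 1) * h) := by
      have : d (((k : ℝ) + 1 / 2) * h) ≤ d (((k : ℝ) + 1) * h) :=
        H.deriv_mono (by positivity) (by nlinarith)
      rw [hx]; unfold midSlope; nlinarith
    have hsq : 2 * x ^ 2 ≤ h * h * d A ^ 2 := by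
      have : x ^ 2 ≤ (h / 2 * d A) ^ 2 := by gcongr
      nlinarith [sq_nonneg (h * d A)]
    obtain ⟨r1, r2⟩ := ratio_bounds hx0 (by linarith)
    obtain ⟨s1, s2⟩ := H.sub_bounds (s := k * h) (t := ((k : ℝ) + 1) * h) hk0 (by nlinarith)
    rw [show ((k : ℝ) + 1) * h - k * h = h by ring] at s1 s2
    have hs : stepWeight d h (k + 1) = stepWeight d h k * ((1 - x) / (1 + x)) := by
      unfold stepWeight; rw [Finset.prod_range_succ]
    rw [hs]
    constructor
    · refine le_trans ?_ (mul_le_mul ih1 r1 (Real.exp_pos _).le ((Real.exp_pos _).le.trans ih1))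
      rw [← Real.exp_add]
      refine Real.exp_le_exp.2 ?_
      nlinarith
    · refine le_trans (mul_le_mul ih2 r2 ((Real.exp_pos _).le.trans r1) (Real.exp_pos _).le) ?_
      rw [← Real.exp_add]
      refine Real.exp_le_exp.2 ?_
      nlinarith

lemma tendsto_stepKernel (H : IsPotential q d) {h : ℕ → ℝ} (hh : ∀ n, 0 < h n)
    (hh1 : ∀ n, h n ≤ 1) (hlim : Tendsto h atTop (𝓝 0)) (t : ℝ) :
    Tendsto (fun n => stepKernel d (h n) t) atTop (𝓝 (Real.exp (-q t))) := by
  set A := |t| + 1 with hA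
  set u : ℕ → ℝ := fun n => (((round (t / h n)).natAbs : ℕ) : ℝ) * h n with hu
  have hqc : Continuous q := continuous_iff_continuousAt.2 fun x => (H.hasDerivAt x).continuousAt
  have hut : Tendsto u atTop (𝓝 |t|) := by
    rw [tendsto_iff_dist_tendsto_zero]
    refine squeeze_zero (fun _ => dist_nonneg) (fun n => abs_sub_round_mul_le (hh n) t) ?_
    simpa using hlim.div_const 2
  have hq : Tendsto (fun n => q (u n)) atTop (𝓝 (q t)) := by
    have h1 : q |t| = q t := by
      rcases abs_choice t with h | h <;> rw [h]
      exact H.even t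
    rw [← h1]
    exact (hqc.tendsto _).comp hut
  have he1 : Tendsto (fun n => h n * d (u n)) atTop (𝓝 0) := by
    simpa using hlim.mul ((H.cont.tendsto _).comp hut)
  have he2 : Tendsto (fun n => u n * h n * d A ^ 2) atTop (𝓝 0) := by
    simpa using (hut.mul hlim).mul_const (d A ^ 2)
  have hev : ∀ᶠ n in atTop, h n * d A ≤ 1 := by
    have : Tendsto (fun n => h n * d A) atTop (𝓝 0) := by simpa using hlim.mul_const (d A)
    exact this.eventually (Iic_mem_nhds one_pos)
  have huA : ∀ n, u n ≤ A := fun n => by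
    have := (abs_le.1 (abs_sub_round_mul_le (hh n) t)).2
    have := hh1 n
    have := hh n
    simp only [hu, hA]
    linarith
  refine tendsto_of_tendsto_of_tendsto_of_le_of_le'
    (g := fun n => Real.exp (-q (u n) - h n * d (u n) - u n * h n * d A ^ 2))
    (h := fun n => Real.exp (-q (u n) + h n * d (u n) + u n * h n * d A ^ 2)) ?_ ?_
    (hev.mono fun n hn => (stepWeight_bounds H (hh n) hn _ (huA n)).1)
    (hev.mono fun n hn => (stepWeight_bounds H (hh n) hn _ (huA n)).2)
  · refine (Real.continuous_exp.tendsto _).comp ?_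
    simpa using (hq.neg.sub he1).sub he2
  · refine (Real.continuous_exp.tendsto _).comp ?_
    simpa using (hq.neg.add he1).add he2

/-- A mesh with `x_K = 1`, for which the step kernel is supported on `2K + 1` cells. -/
lemma exists_mesh (H : IsPotential q d) (K : ℕ) : ∃ h, 0 < h ∧ midSlope d h K = 1 := by
  obtain ⟨a, ha0, ha⟩ := H.coercive
  set f : ℝ → ℝ := fun h => midSlope d h K with hf
  have hfc : Continuous f := by
    have := H.cont
    simp only [hf]
    unfold midSlope
    fun_prop
  set M := 4 + 2 / a with hM
  have hMpos : 0 < M := by positivity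
  have hfM : 1 ≤ f M := by
    have h1 : a ≤ d (((K : ℝ) + 1 / 2) * M) := by
      refine le_trans ?_ (ha _ (by positivity))
      have : 1 ≤ ((K : ℝ) + 1 / 2) * M - 1 := by
        have h2 : 0 < 2 / a := by positivity
        have h3 : 0 ≤ (K : ℝ) * M := by positivity
        nlinarith
      nlinarith
    have h2 : M * a = 4 * a + 2 := by rw [hM]; field_simp
    have h3 : M / 2 * a ≤ M / 2 * d (((K : ℝ) + 1 / 2) * M) :=
      mul_le_mul_of_nonneg_left h1 (by positivity)
    simp only [hf]
    unfold midSlope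
    linarith
  have hf0 : f 0 = 0 := by simp [hf, midSlope]
  obtain ⟨h, hmem, hh⟩ := intermediate_value_Icc hMpos.le hfc.continuousOn
    (show (1 : ℝ) ∈ Set.Icc (f 0) (f M) from ⟨by rw [hf0]; norm_num, hfM⟩)
  refine ⟨h, lt_of_le_of_ne hmem.1 ?_, hh⟩
  rintro rfl
  rw [hf0] at hh
  norm_num at hh

lemma eventually_mesh_lt (H : IsPotential q d) {ε : ℝ} (hε : 0 < ε) :
    ∀ᶠ K : ℕ in atTop, ∀ h, midSlope d h K = 1 → h < ε := by
  obtain ⟨a, ha0, ha⟩ := H.coercive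
  have h1 : Tendsto (fun K : ℕ => ε / 2 * (a * (((K : ℝ) + 1 / 2) * ε - 1))) atTop atTop := by
    refine Tendsto.const_mul_atTop (by positivity) (Tendsto.const_mul_atTop ha0 ?_)
    refine tendsto_atTop_add_const_right _ _ (Tendsto.atTop_mul_const hε ?_)
    exact tendsto_atTop_add_const_right _ _ tendsto_natCast_atTop_atTop
  filter_upwards [h1.eventually_gt_atTop 1] with K hK h hh
  by_contra! hle
  have h2 : a * (((K : ℝ) + 1 / 2) * ε - 1) ≤ d (((K : ℝ) + 1 / 2) * h) :=
    (ha _ (by positivity)).trans (H.deriv_mono (by positivity) (by gcongr))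
  have h3 : 0 ≤ d (((K : ℝ) + 1 / 2) * h) :=
    H.deriv_nonneg (mul_nonneg (by positivity) (hε.le.trans hle))
  have h4 : ε / 2 * (a * (((K : ℝ) + 1 / 2) * ε - 1)) ≤ h / 2 * d (((K : ℝ) + 1 / 2) * h) :=
    (mul_le_mul_of_nonneg_left h2 (by positivity)).trans
      (mul_le_mul_of_nonneg_right (by linarith) h3)
  unfold midSlope at hh
  linarith

theorem IsPotential.hasRealZeros (H : IsPotential q d) {D : ℂ[X]}
    (hD : ∀ t : ℝ, D.eval (t : ℂ) = (d t : ℂ)) (hDd : 0 < D.natDegree)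
    (hDr : ∀ r, D.IsRoot r → r.re = 0) : HasRealZeros fun t => Real.exp (-q t) := by
  obtain ⟨a, ha0, ha⟩ := H.coercive
  choose h hpos hK using exists_mesh H
  obtain ⟨K₀, hK₀⟩ := eventually_atTop.1 (eventually_mesh_lt H one_pos)
  have hlim : Tendsto h atTop (𝓝 0) := by
    refine tendsto_order.2 ⟨fun b hb => Eventually.of_forall fun n => hb.trans (hpos n),
      fun b hb => (eventually_mesh_lt H hb).mono fun n hn => hn _ (hK n)⟩
  have hpos' : ∀ n, 0 < h (n + K₀) := fun n => hpos _
  have hle' : ∀ n, h (n + K₀) ≤ 1 := fun n => (hK₀ _ (by omega) _ (hK _)).le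
  have hlim' : Tendsto (fun n => h (n + K₀)) atTop (𝓝 0) :=
    (tendsto_add_atTop_iff_nat K₀).2 hlim
  have hm : ∀ n, AEStronglyMeasurable (stepKernel d (h (n + K₀))) := fun n =>
    (measurable_stepKernel _ _).aestronglyMeasurable
  have hb : ∀ n t, |stepKernel d (h (n + K₀)) t| ≤
      Real.exp (5 * a / 8) * Real.exp (-(a / 16) * t ^ 2) := fun n t =>
    abs_stepKernel_le H (hpos' n) (hle' n) (hK _) ha0 ha t
  have ht := tendsto_stepKernel H hpos' hle' hlim'
  refine HasRealZeros.of_tendsto (by positivity : 0 < a / 16) hm hb ht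
    (fun n => hasRealZeros_stepKernel H (hpos' n) (hK _) hD hDd hDr)
    (fun t => Real.exp_pos _)

end Limit

/-! ### Polynomial approximation of class Q -/

/-- The polynomials approximating a function of class Q: even, with nonnegative coefficients, a
positive coefficient at `t^{2m}`, vanishing at `0`, and with all complex roots on the imaginary
axis. -/
structure IsNicePoly (m : ℕ) (q : ℝ[X]) : Prop where
  coeff_nonneg : ∀ i, 0 ≤ q.coeff i
  coeff_pos : 0 < q.coeff (2 * m)
  even : ∀ t : ℝ, q.eval (-t) = q.eval t
  zero : q.eval 0 = 0
  roots : ∀ r : ℂ, (q.map Complex.ofRealHom).IsRoot r → r.re = 0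

namespace IsNicePoly

lemma base {k : ℝ} (hk : 0 < k) {m : ℕ} (hm : 0 < m) :
    IsNicePoly m (C k * X ^ (2 * m)) where
  coeff_nonneg i := by
    rw [coeff_C_mul, coeff_X_pow]
    split_ifs <;> simp [hk.le]
  coeff_pos := by simpa using hk
  even t := by simp
  zero := by simp [hm.ne']
  roots r hr := by
    have : r = 0 := by simpa [IsRoot, hk.ne', hm.ne'] using hr
    simp [this]

lemma mul {m : ℕ} {q : ℝ[X]} (hq : IsNicePoly m q) {c : ℝ} (hc : 0 ≤ c) :
    IsNicePoly m (q * (1 + C c * X ^ 2)) := by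
  have hco : ∀ i, q.coeff i ≤ (q * (1 + C c * X ^ 2)).coeff i := by
    intro i
    rw [mul_add, mul_one, coeff_add, mul_left_comm, coeff_C_mul, coeff_mul_X_pow']
    split_ifs
    · linarith [mul_nonneg hc (hq.coeff_nonneg (i - 2))]
    · simp
  refine ⟨fun i => (hq.coeff_nonneg i).trans (hco i), hq.coeff_pos.trans_le (hco _), fun t => ?_,
    ?_, fun r hr => ?_⟩
  · simp [hq.even t]
  · simp [hq.zero]
  · rw [Polynomial.map_mul, IsRoot, eval_mul, mul_eq_zero] at hr
    rcases hr with hr | hr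
    · exact hq.roots r hr
    · have h1 : (1 : ℂ) + c * r ^ 2 = 0 := by simpa using hr
      have him := congrArg Complex.im h1
      have hre := congrArg Complex.re h1
      simp [pow_two] at him hre
      rcases him with h | h
      · rw [h] at hre; norm_num at hre
      · by_contra hr0
        have h0 : r.im = 0 := by
          have : r.re * r.im = 0 := by linarith
          exact (mul_eq_zero.1 this).resolve_left hr0
        rw [h0] at hre
        nlinarith [mul_self_nonneg r.re]

lemma mul_pow {m : ℕ} {q : ℝ[X]} (hq : IsNicePoly m q) {c : ℝ} (hc : 0 ≤ c) (n : ℕ) :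
    IsNicePoly m (q * (1 + C c * X ^ 2) ^ n) := by
  induction n with
  | zero => simpa using hq
  | succ n ih => rw [pow_succ, ← mul_assoc]; exact ih.mul hc

lemma mul_prod {m : ℕ} {q : ℝ[X]} (hq : IsNicePoly m q) {c : ℕ → ℝ} (hc : ∀ i, 0 ≤ c i) (n : ℕ) :
    IsNicePoly m (q * ∏ i ∈ Finset.range n, (1 + C (c i) * X ^ 2)) := by
  induction n with
  | zero => simpa using hq
  | succ n ih => rw [Finset.prod_range_succ, ← mul_assoc]; exact ih.mul (hc n)

lemma le_eval {p : ℝ[X]} (hp : ∀ i, 0 ≤ p.coeff i) (i : ℕ) {t : ℝ} (ht : 0 ≤ t) :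
    p.coeff i * t ^ i ≤ p.eval t := by
  rw [eval_eq_sum_range]
  rcases le_or_gt i p.natDegree with hi | hi
  · exact Finset.single_le_sum (f := fun i => p.coeff i * t ^ i)
      (fun j _ => mul_nonneg (hp j) (pow_nonneg ht j)) (Finset.mem_range.2 (by omega))
  · rw [coeff_eq_zero_of_natDegree_lt hi, zero_mul]
    exact Finset.sum_nonneg fun j _ => mul_nonneg (hp j) (pow_nonneg ht j)

lemma isPotential {m : ℕ} (hm : 0 < m) {q : ℝ[X]} (hq : IsNicePoly m q) :
    IsPotential (fun t => q.eval t) (fun t => q.derivative.eval t) := by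
  have hd : ∀ i, 0 ≤ q.derivative.coeff i := fun i => by
    rw [coeff_derivative]
    exact mul_nonneg (hq.coeff_nonneg _) (by positivity)
  have hdpos : 0 < q.derivative.coeff (2 * m - 1) := by
    rw [coeff_derivative, show 2 * m - 1 + 1 = 2 * m by omega]
    exact mul_pos hq.coeff_pos (by positivity)
  refine ⟨fun t => q.hasDerivAt t, hq.zero, hq.even, q.derivative.continuous, ?_,
    q.derivative.coeff (2 * m - 1), hdpos, fun t ht => ?_⟩
  · intro s hs t ht hst
    simp only [eval_eq_sum_range]
    have hs' : 0 ≤ s := hs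
    refine Finset.sum_lt_sum (fun i _ => ?_) ⟨2 * m - 1, ?_, ?_⟩
    · exact mul_le_mul_of_nonneg_left (pow_le_pow_left₀ hs' hst.le i) (hd i)
    · exact Finset.mem_range.2 (Nat.lt_succ_of_le (le_natDegree_of_ne_zero hdpos.ne'))
    · exact mul_lt_mul_of_pos_left (pow_lt_pow_left₀ hst hs' (by omega)) hdpos
  · refine le_trans (mul_le_mul_of_nonneg_left ?_ hdpos.le) (le_eval hd (2 * m - 1) ht)
    rcases le_total t 1 with h1 | h1
    · linarith [pow_nonneg ht (2 * m - 1)]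
    · linarith [le_self_pow₀ h1 (show 2 * m - 1 ≠ 0 by omega)]

theorem hasRealZeros {m : ℕ} (hm : 0 < m) {q : ℝ[X]} (hq : IsNicePoly m q) :
    HasRealZeros fun t => Real.exp (-q.eval t) := by
  have hcoef : (q.derivative.map Complex.ofRealHom).coeff (2 * m - 1) ≠ 0 := by
    rw [coeff_map, coeff_derivative, show 2 * m - 1 + 1 = 2 * m by omega]
    simp only [Complex.ofRealHom_eq_coe, Complex.ofReal_ne_zero]
    exact (mul_pos hq.coeff_pos (by positivity)).ne'
  have hdeg : 0 < (q.derivative.map Complex.ofRealHom).natDegree :=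
    lt_of_lt_of_le (by omega) (le_natDegree_of_ne_zero hcoef)
  refine (hq.isPotential hm).hasRealZeros (D := q.derivative.map Complex.ofRealHom)
    (fun t => ?_) hdeg fun r hr => ?_
  · exact eval_map_apply Complex.ofRealHom t
  · have hQdeg : 0 < (q.map Complex.ofRealHom).degree := by
      rw [← natDegree_pos_iff_degree_pos]
      refine lt_of_lt_of_le (by omega : 0 < 2 * m) (le_natDegree_of_ne_zero ?_)
      rw [coeff_map]
      simpa using hq.coeff_pos.ne'
    have hne : (q.map Complex.ofRealHom).derivative ≠ 0 := by
      rw [derivative_map]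
      intro h; rw [h] at hdeg; simp at hdeg
    have hmem : r ∈ (q.map Complex.ofRealHom).derivative.rootSet ℂ := by
      rw [mem_rootSet]
      refine ⟨hne, ?_⟩
      rw [derivative_map]
      simpa [IsRoot, aeval_def, eval₂_eq_eval_map] using hr
    -- Gauss–Lucas: the imaginary axis is convex and contains the roots of `q`.
    have hconv := rootSet_derivative_subset_convexHull_rootSet hQdeg hmem
    have hsub : (q.map Complex.ofRealHom).rootSet ℂ ⊆ {z : ℂ | z.re = 0} := by
      intro z hz
      rw [mem_rootSet] at hz
      exact hq.roots z (by simpa [IsRoot, aeval_def, eval₂_eq_eval_map] using hz.2)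
    have hc : Convex ℝ {z : ℂ | z.re = 0} :=
      convex_hyperplane (f := fun z : ℂ => z.re) ⟨Complex.add_re, fun c z => by simp⟩ 0
    exact convexHull_min hsub hc hconv

end IsNicePoly

/-- Every zero of `G(z) = ∫ e^{-q(t)} e^{izt} dt` is real, for `q` of class Q. -/
theorem zeros_real_of_classQ (q : ℝ → ℝ) (hq : IsClassQ q) (z : ℂ)
    (hz : (∫ t : ℝ, (Real.exp (-(q t)) : ℂ) * Complex.exp (Complex.I * z * t)) = 0) :
    z.im = 0 := by
  obtain ⟨k, m, μ, S, β, hk, hm, hμ, -, hsum, hqf, -⟩ := hq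
  -- Indices outside `S` get coefficient `0`, turning the product over `S` into one over `ℕ`.
  set c : ℕ → ℝ := S.indicator fun n => 1 / β n ^ 2 with hc
  have hc0 : ∀ i, 0 ≤ c i := fun i => Set.indicator_nonneg (fun j _ => by positivity) i
  have hcs : Summable c := summable_subtype_iff_indicator.1 hsum
  set p : ℕ → ℝ[X] := fun n => C k * X ^ (2 * m) * (1 + C (μ / n) * X ^ 2) ^ n *
    ∏ i ∈ Finset.range n, (1 + C (c i) * X ^ 2) with hp
  have hpn : ∀ n, IsNicePoly m (p n) := fun n =>
    ((IsNicePoly.base hk hm).mul_pow (by positivity) n).mul_prod hc0 n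
  have heval : ∀ n t, (p n).eval t = k * t ^ (2 * m) * (1 + μ * t ^ 2 / n) ^ n *
      ∏ i ∈ Finset.range n, (1 + c i * t ^ 2) := by
    intro n t
    simp only [hp, eval_mul, eval_pow, eval_add, eval_one, eval_C, eval_X, eval_prod]
    congr 4
    ring
  have hlim : ∀ t, Tendsto (fun n => (p n).eval t) atTop (𝓝 (q t)) := by
    intro t
    have h1 : Tendsto (fun n : ℕ => (1 + μ * t ^ 2 / n) ^ n) atTop
        (𝓝 (Real.exp (μ * t ^ 2))) := Real.tendsto_one_add_div_pow_exp _
    have h2 : Tendsto (fun n : ℕ => ∏ i ∈ Finset.range n, (1 + c i * t ^ 2)) atTop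
        (𝓝 (∏' i, (1 + c i * t ^ 2))) :=
      (Real.multipliable_one_add_of_summable (hcs.mul_right _)).hasProd.tendsto_prod_nat
    have h3 : ∏' n : S, (1 + t ^ 2 / β n ^ 2) = ∏' i, (1 + c i * t ^ 2) := by
      rw [tprod_subtype S fun n => 1 + t ^ 2 / β n ^ 2]
      refine tprod_congr fun i => ?_
      by_cases hi : i ∈ S
      · rw [Set.mulIndicator_of_mem hi, hc, Set.indicator_of_mem hi]; ring
      · rw [Set.mulIndicator_of_notMem hi, hc, Set.indicator_of_notMem hi]; ring
    simp only [heval]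
    rw [hqf, h3]
    exact (h1.const_mul _).mul h2
  have hlow : ∀ n t, k * (t ^ 2 - 1) ≤ (p n).eval t := by
    intro n t
    have h1 : t ^ 2 - 1 ≤ t ^ (2 * m) := by
      rw [pow_mul]
      rcases le_total (t ^ 2) 1 with h | h
      · linarith [pow_nonneg (sq_nonneg t) m]
      · linarith [le_self_pow₀ h hm.ne']
    have h2 : 1 ≤ (1 + μ * t ^ 2 / n) ^ n := by
      refine one_le_pow₀ ?_
      have : 0 ≤ μ * t ^ 2 / n := by positivity
      linarith
    have h3 : 1 ≤ ∏ i ∈ Finset.range n, (1 + c i * t ^ 2) := by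
      refine Finset.prod_induction _ (fun x : ℝ => 1 ≤ x)
        (fun _ _ ha hb => one_le_mul_of_one_le_of_one_le ha hb) le_rfl fun i _ => ?_
      have := mul_nonneg (hc0 i) (sq_nonneg t)
      linarith
    have h0 : 0 ≤ k * t ^ (2 * m) := mul_nonneg hk.le (by rw [pow_mul]; positivity)
    rw [heval, mul_assoc]
    calc k * (t ^ 2 - 1) ≤ k * t ^ (2 * m) := mul_le_mul_of_nonneg_left h1 hk.le
      _ ≤ _ := le_mul_of_one_le_right h0 (one_le_mul_of_one_le_of_one_le h2 h3)
  have hreal : HasRealZeros fun t => Real.exp (-(q t)) := by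
    refine HasRealZeros.of_tendsto (φ := fun n t => Real.exp (-(p n).eval t)) (C := Real.exp k) hk
      (fun n => ?_) (fun n t => ?_) (fun t => ?_) (fun n => (hpn n).hasRealZeros hm)
      (fun t => Real.exp_pos _)
    · exact (Real.continuous_exp.comp (p n).continuous.neg).aestronglyMeasurable
    · rw [Real.abs_exp, ← Real.exp_add]
      exact Real.exp_le_exp.2 (by linarith [hlow n t])
    · exact (Real.continuous_exp.tendsto _).comp (hlim t).neg
  exact hreal z hz
end

section
/- Let q be a function of class Q and let n be a positive integer. Then every zero of the entire function G_n(z) = ∫_{-λ_n}^{λ_n} (n/(n+1))·(1 - q(t)/n)^{n+1}·e^{izt} dt is real. -/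
open Polynomial Filter Topology MeasureTheory

namespace ClassQ

/-! ### Polynomials with only real zeros -/

/-- A complex polynomial all of whose zeros are real; the zero polynomial is included. -/
def RealRooted (p : ℂ[X]) : Prop :=
  ∀ z : ℂ, z.im ≠ 0 → p.eval z = 0 → p = 0

lemma RealRooted.im_eq_zero {p : ℂ[X]} (hp : RealRooted p) {r : ℂ} (hr : r ∈ p.roots) :
    r.im = 0 := by
  by_contra h
  have hp0 : p ≠ 0 := ne_zero_of_mem_roots hr
  exact hp0 (hp r h ((mem_roots hp0).1 hr))

lemma im_sum_one_div (z : ℂ) (M : Multiset ℂ) (hM : ∀ r ∈ M, r.im = 0) :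
    (M.map fun r => 1 / (z - r)).sum.im =
      -z.im * (M.map fun r => (Complex.normSq (z - r))⁻¹).sum := by
  induction M using Multiset.induction_on with
  | empty => simp
  | cons a M ih =>
    simp only [Multiset.map_cons, Multiset.sum_cons, Complex.add_im]
    rw [ih fun r hr => hM r (Multiset.mem_cons_of_mem hr), one_div, Complex.inv_im,
      Complex.sub_im, hM a (Multiset.mem_cons_self a M)]
    ring

lemma sum_inv_normSq_pos (z : ℂ) (hz : z.im ≠ 0) (M : Multiset ℂ) (hM : ∀ r ∈ M, r.im = 0)
    (h0 : M ≠ 0) : 0 < (M.map fun r => (Complex.normSq (z - r))⁻¹).sum := by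
  obtain ⟨a, ha⟩ := Multiset.exists_mem_of_ne_zero h0
  obtain ⟨N, rfl⟩ := Multiset.exists_cons_of_mem ha
  rw [Multiset.map_cons, Multiset.sum_cons]
  apply add_pos_of_pos_of_nonneg
  · rw [inv_pos, Complex.normSq_pos]
    intro h
    have := congrArg Complex.im h
    simp [hM a ha] at this
    exact hz this
  · apply Multiset.sum_nonneg
    intro x hx
    obtain ⟨r, -, rfl⟩ := Multiset.mem_map.1 hx
    exact inv_nonneg.2 (Complex.normSq_nonneg _)

/-- For real `a`, `b` the operator `a + b D` preserves real-rootedness: off the real axis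
`p' / p = ∑ 1 / (z - r)` has nonzero imaginary part, so it cannot equal `-a / b`. -/
lemma RealRooted.add_derivative {p : ℂ[X]} (hp : RealRooted p) (a b : ℝ) :
    RealRooted (C (a : ℂ) * p + C (b : ℂ) * derivative p) := by
  intro z hz h
  by_cases hp0 : p = 0
  · simp [hp0]
  have hpz : p.eval z ≠ 0 := fun h' => hp0 (hp z hz h')
  simp only [eval_add, eval_mul, eval_C] at h
  have hspl := (IsAlgClosed.splits p).eval_derivative_div_eval_of_ne_zero hpz
  have him := im_sum_one_div z p.roots fun r hr => hp.im_eq_zero hr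
  rw [← hspl] at him
  have hlin : (a : ℂ) + b * (eval z (derivative p) / eval z p) = 0 := by
    field_simp
    linear_combination h
  have hbim : b * (eval z (derivative p) / eval z p).im = 0 := by
    have := congrArg Complex.im hlin
    simpa using this
  rcases mul_eq_zero.1 hbim with hb | hb
  · subst hb
    have : a = 0 := by simpa using hlin
    simp [this]
  · by_cases hr : p.roots = 0
    · have hdeg : p.natDegree = 0 := by
        rw [(IsAlgClosed.splits p).natDegree_eq_card_roots, hr, Multiset.card_zero]
      have hd : derivative p = 0 := derivative_of_natDegree_zero hdeg
      have : a = 0 := by simpa [hd] using hlin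
      simp [this, hd]
    · exfalso
      have := sum_inv_normSq_pos z hz p.roots (fun r hr => hp.im_eq_zero hr) hr
      rw [hb] at him
      rcases mul_eq_zero.1 him.symm with h' | h'
      · exact hz (by linarith)
      · exact this.ne' h'

lemma RealRooted.derivative {p : ℂ[X]} (hp : RealRooted p) : RealRooted (derivative p) := by
  simpa using hp.add_derivative 0 1

lemma RealRooted.const_mul {p : ℂ[X]} (hp : RealRooted p) (c : ℂ) : RealRooted (C c * p) := by
  intro z hz h
  rw [eval_mul, eval_C, mul_eq_zero] at h
  rcases h with h | h
  · simp [h]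
  · simp [hp z hz h]

/-- `|p (x + i y)|` is nondecreasing in `|y|` when `p` is real-rooted, since each factor is. -/
lemma RealRooted.norm_eval_le {p : ℂ[X]} (hp : RealRooted p) {z w : ℂ} (hre : w.re = z.re)
    (him : |w.im| ≤ |z.im|) : ‖p.eval w‖ ≤ ‖p.eval z‖ := by
  rw [(IsAlgClosed.splits p).eval_eq_prod_roots, (IsAlgClosed.splits p).eval_eq_prod_roots,
    norm_mul, norm_mul]
  gcongr
  have : ∀ M : Multiset ℂ, (∀ r ∈ M, r.im = 0) →
      ‖(M.map fun r => w - r).prod‖ ≤ ‖(M.map fun r => z - r).prod‖ := by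
    intro M
    induction M using Multiset.induction_on with
    | empty => simp
    | cons a M ih =>
      intro hM
      simp only [Multiset.map_cons, Multiset.prod_cons, norm_mul]
      gcongr
      · rw [Complex.norm_def, Complex.norm_def]
        apply Real.sqrt_le_sqrt
        have ha := hM a (Multiset.mem_cons_self a M)
        simp only [Complex.normSq_apply, Complex.sub_re, Complex.sub_im, ha, hre]
        have := sq_le_sq.2 him
        nlinarith
      · exact ih fun r hr => hM r (Multiset.mem_cons_of_mem hr)
  exact this _ fun r hr => hp.im_eq_zero hr

/-! ### Even entire functions approximable by real-rooted polynomials -/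

/-- The even entire functions that are locally uniform limits of even real-rooted polynomials
(with the zero function included). -/
def EvenLP (f : ℂ → ℂ) : Prop :=
  Differentiable ℂ f ∧ ∀ R > 0, ∀ ε > 0, ∃ p : ℂ[X], p.comp (-X) = p ∧ RealRooted p ∧
    ∀ z : ℂ, ‖z‖ ≤ R → ‖f z - p.eval z‖ ≤ ε

lemma norm_deriv_le {f : ℂ → ℂ} (hf : Differentiable ℂ f) {R ε : ℝ}
    (h : ∀ z : ℂ, ‖z‖ ≤ R + 1 → ‖f z‖ ≤ ε) (z : ℂ) (hz : ‖z‖ ≤ R) : ‖deriv f z‖ ≤ ε := by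
  have := Complex.norm_deriv_le_of_forall_mem_sphere_norm_le (c := z) (R := 1) (C := ε) one_pos
    hf.diffContOnCl (fun w hw => h w ?_)
  · simpa using this
  · have : ‖w - z‖ = 1 := by simpa [dist_eq_norm] using hw
    calc ‖w‖ = ‖z + (w - z)‖ := by ring_nf
      _ ≤ ‖z‖ + ‖w - z‖ := norm_add_le _ _
      _ ≤ R + 1 := by linarith

lemma norm_deriv_sub_le {f : ℂ → ℂ} (hf : Differentiable ℂ f) (p : ℂ[X]) {R ε : ℝ}
    (h : ∀ z : ℂ, ‖z‖ ≤ R + 1 → ‖f z - p.eval z‖ ≤ ε) (z : ℂ) (hz : ‖z‖ ≤ R) :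
    ‖deriv f z - (derivative p).eval z‖ ≤ ε := by
  have := norm_deriv_le (f := fun z => f z - p.eval z) (hf.sub p.differentiable) h z hz
  rwa [deriv_fun_sub hf.differentiableAt p.differentiableAt, Polynomial.deriv] at this

lemma comp_neg_derivative {p : ℂ[X]} (hp : p.comp (-X) = p) :
    (derivative p).comp (-X) = -derivative p := by
  have := congrArg derivative hp
  rw [derivative_comp] at this
  simp only [derivative_neg, derivative_X, neg_mul, one_mul] at this
  exact neg_eq_iff_eq_neg.1 this

lemma comp_neg_derivative_derivative {p : ℂ[X]} (hp : p.comp (-X) = p) :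
    (derivative (derivative p)).comp (-X) = derivative (derivative p) := by
  have := congrArg derivative (comp_neg_derivative hp)
  rw [derivative_comp] at this
  simpa using this

lemma EvenLP.const_mul {f : ℂ → ℂ} (hf : EvenLP f) (c : ℂ) : EvenLP fun z => c * f z := by
  refine ⟨hf.1.const_mul c, fun R hR ε hε => ?_⟩
  obtain ⟨p, hpe, hpr, hp⟩ := hf.2 R hR (ε / (‖c‖ + 1)) (by positivity)
  refine ⟨C c * p, by simp [hpe], hpr.const_mul c, fun z hz => ?_⟩
  rw [eval_mul, eval_C, ← mul_sub, norm_mul]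
  calc ‖c‖ * ‖f z - eval z p‖ ≤ (‖c‖ + 1) * (ε / (‖c‖ + 1)) := by
        gcongr
        · linarith
        · exact hp z hz
    _ = ε := by field_simp

/-- The operator `ρ² - D² = (ρ - D)(ρ + D)` preserves the class. -/
lemma EvenLP.sub_deriv_deriv {f : ℂ → ℂ} (hf : EvenLP f) (ρ : ℝ) :
    EvenLP fun z => (ρ : ℂ) ^ 2 * f z - deriv (deriv f) z := by
  have hd : Differentiable ℂ (deriv f) := hf.1.deriv
  refine ⟨(hf.1.const_mul _).sub hd.deriv, fun R hR ε hε => ?_⟩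
  obtain ⟨p, hpe, hpr, hp⟩ := hf.2 (R + 1 + 1) (by positivity) (ε / (ρ ^ 2 + 1)) (by positivity)
  refine ⟨C ((ρ : ℂ) ^ 2) * p - derivative (derivative p), ?_, ?_, fun z hz => ?_⟩
  · simp [hpe, comp_neg_derivative_derivative hpe]
  · have := (hpr.add_derivative ρ 1).add_derivative ρ (-1)
    convert this using 1
    simp only [derivative_add, derivative_mul, derivative_C, Complex.ofReal_one,
      Complex.ofReal_neg, map_neg, map_one, map_pow, derivative_one]
    ring
  · have h2 := norm_deriv_sub_le hd (derivative p) (norm_deriv_sub_le hf.1 p hp) z hz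
    have h0 := hp z (by linarith)
    have : (ρ : ℂ) ^ 2 * f z - deriv (deriv f) z
        - (C ((ρ : ℂ) ^ 2) * p - derivative (derivative p)).eval z
        = (ρ : ℂ) ^ 2 * (f z - p.eval z)
          - (deriv (deriv f) z - (derivative (derivative p)).eval z) := by
      rw [eval_sub, eval_mul, eval_C]
      ring
    rw [this]
    calc _ ≤ ‖(ρ : ℂ) ^ 2 * (f z - p.eval z)‖
          + ‖deriv (deriv f) z - (derivative (derivative p)).eval z‖ := norm_sub_le _ _
      _ ≤ ρ ^ 2 * (ε / (ρ ^ 2 + 1)) + ε / (ρ ^ 2 + 1) := by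
        rw [norm_mul, norm_pow, Complex.norm_real, Real.norm_eq_abs, sq_abs]
        gcongr
      _ = ε := by field_simp

/-- The derivative of an even function of the class, divided by `z`, is again in the class. -/
lemma EvenLP.of_mul_eq_deriv {f g : ℂ → ℂ} (hf : EvenLP f) (hg : Differentiable ℂ g) (c : ℂ)
    (h : ∀ z, z * g z = c * deriv f z) : EvenLP g := by
  refine ⟨hg, fun R hR ε hε => ?_⟩
  obtain ⟨p, hpe, hpr, hp⟩ := hf.2 (R + 1) (by positivity) (R * ε / (‖c‖ + 1)) (by positivity)
  have hodd := comp_neg_derivative hpe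
  have hc0 : (derivative p).coeff 0 = 0 := by
    have := congrArg (eval 0) hodd
    simp only [eval_comp, eval_neg, eval_X, neg_zero] at this
    rw [coeff_zero_eq_eval_zero]
    linear_combination (1 / 2) * this
  set d := (derivative p).divX with hd
  have hdX : d * X = derivative p := by
    have := divX_mul_X_add (derivative p)
    rwa [hc0, C_0, add_zero] at this
  refine ⟨C c * d, ?_, ?_, ?_⟩
  · have h1 : d.comp (-X) * X = d * X := by
      have h2 := hodd
      rw [← hdX, mul_comp, X_comp] at h2
      linear_combination -h2
    rw [mul_comp, C_comp, mul_right_cancel₀ X_ne_zero h1]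
  · have hdr : RealRooted d := by
      intro z hz hz0
      have : derivative p = 0 := hpr.derivative z hz (by rw [← hdX, eval_mul, hz0, zero_mul])
      rw [hd, this, divX_zero]
    exact hdr.const_mul c
  · have hdiff : Differentiable ℂ fun z => g z - (C c * d).eval z :=
      hg.sub (C c * d).differentiable
    intro z hz
    -- The estimate is immediate on `|z| = R`; the maximum principle transfers it to the disc.
    refine Complex.norm_le_of_forall_mem_frontier_norm_le (U := Metric.ball (0 : ℂ) R)
      Metric.isBounded_ball hdiff.diffContOnCl (C := ε) (fun w hw => ?_) (z := z) ?_
    · rw [frontier_ball _ hR.ne', mem_sphere_zero_iff_norm] at hw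
      have hb := norm_deriv_sub_le hf.1 p hp w hw.le
      have heq : w * (g w - (C c * d).eval w) = c * (deriv f w - (derivative p).eval w) := by
        rw [mul_sub, h w, ← hdX]
        simp only [eval_mul, eval_C, eval_X]
        ring
      have hn := congrArg norm heq
      rw [norm_mul, norm_mul, hw] at hn
      have : R * ‖g w - (C c * d).eval w‖ ≤ R * ε := by
        rw [hn]
        calc ‖c‖ * ‖deriv f w - (derivative p).eval w‖
            ≤ (‖c‖ + 1) * (R * ε / (‖c‖ + 1)) := by
              gcongr
              linarith
          _ = R * ε := by field_simp
      exact le_of_mul_le_mul_left this hR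
    · rw [closure_ball _ hR.ne']
      simpa using hz

lemma EvenLP.norm_le {f : ℂ → ℂ} (hf : EvenLP f) {z w : ℂ} (hre : w.re = z.re)
    (him : |w.im| ≤ |z.im|) : ‖f w‖ ≤ ‖f z‖ := by
  apply le_of_forall_pos_le_add
  intro ε hε
  obtain ⟨p, -, hpr, hp⟩ := hf.2 (‖z‖ + ‖w‖ + 1) (by positivity) (ε / 2) (by positivity)
  have hz := hp z (by linarith [norm_nonneg w])
  have hw := hp w (by linarith [norm_nonneg z])
  have := hpr.norm_eval_le hre him
  have h1 := norm_sub_norm_le (f w) (p.eval w)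
  have h2 := norm_sub_norm_le (p.eval z) (f z)
  rw [norm_sub_rev] at h2
  linarith

lemma norm_one_add_div_pow_sub_exp_le {R : ℝ} {N : ℕ} (hN : 0 < N) (hRN : R ≤ N) (w : ℂ)
    (hw : ‖w‖ ≤ R) : ‖Complex.exp w - (1 + w / N) ^ N‖ ≤ R ^ 2 * Real.exp R / N := by
  have hN' : (0 : ℝ) < N := by exact_mod_cast hN
  have hR : 0 ≤ R := (norm_nonneg w).trans hw
  have hNc : (N : ℂ) ≠ 0 := by exact_mod_cast hN.ne'
  have he : Complex.exp w = Complex.exp (w / N) ^ N := by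
    rw [← Complex.exp_nat_mul, mul_div_cancel₀ _ hNc]
  have hwN : ‖w / N‖ ≤ R / N := by
    rw [norm_div, Complex.norm_natCast]
    gcongr
  rw [he, ← (Commute.all _ _).mul_geom_sum₂, norm_mul]
  have h1 : ‖Complex.exp (w / N) - (1 + w / N)‖ ≤ (R / N) ^ 2 := by
    rw [← sub_sub]
    refine (Complex.norm_exp_sub_one_sub_id_le (hwN.trans ((div_le_one hN').2 hRN))).trans ?_
    gcongr
  have ha : ‖Complex.exp (w / N)‖ ≤ Real.exp (R / N) :=
    (Complex.norm_exp_le_exp_norm _).trans (Real.exp_le_exp.2 hwN)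
  have hb : ‖1 + w / N‖ ≤ Real.exp (R / N) := by
    calc ‖1 + w / N‖ ≤ 1 + R / N := (norm_add_le _ _).trans (by rw [norm_one]; linarith)
      _ ≤ Real.exp (R / N) := by linarith [Real.add_one_le_exp (R / N)]
  have h2 : ‖∑ i ∈ Finset.range N, Complex.exp (w / N) ^ i * (1 + w / N) ^ (N - 1 - i)‖
      ≤ N * Real.exp R := by
    calc _ ≤ ∑ i ∈ Finset.range N, Real.exp R := by
          refine norm_sum_le_of_le _ fun i hi => ?_
          rw [norm_mul, norm_pow, norm_pow]
          calc _ ≤ Real.exp (R / N) ^ i * Real.exp (R / N) ^ (N - 1 - i) := by gcongr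
            _ = Real.exp (R / N) ^ (N - 1) := by
              rw [← pow_add]
              congr 1
              have := Finset.mem_range.1 hi
              omega
            _ ≤ Real.exp (R / N) ^ N :=
              pow_le_pow_right₀ (Real.one_le_exp (by positivity)) (Nat.sub_le _ _)
            _ = Real.exp R := by
              rw [← Real.exp_nat_mul, mul_div_cancel₀ _ hN'.ne']
      _ = N * Real.exp R := by simp
  calc _ ≤ (R / N) ^ 2 * (N * Real.exp R) := by gcongr
    _ = R ^ 2 * Real.exp R / N := by field_simp

/-- `cos (a z)` is the limit of `((1 + i a z / N) ^ N + (1 - i a z / N) ^ N) / 2`, whose zeros are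
equidistant from `± i N / a` and hence real. -/
lemma evenLP_cos {a : ℝ} (ha : 0 < a) : EvenLP fun z => Complex.cos (a * z) := by
  refine ⟨by fun_prop, fun R hR ε hε => ?_⟩
  set A := a * R with hA
  have hApos : 0 < A := by positivity
  obtain ⟨N, hN⟩ := exists_nat_gt (max A (A ^ 2 * Real.exp A / ε))
  have hNA : A ≤ N := ((le_max_left _ _).trans_lt hN).le
  have hN' : (0 : ℝ) < N := lt_of_lt_of_le hApos hNA
  have hN0 : 0 < N := by exact_mod_cast hN'
  have hNc : (N : ℂ) ≠ 0 := by exact_mod_cast hN0.ne'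
  have hNε : A ^ 2 * Real.exp A / N ≤ ε := by
    have := ((le_max_right _ _).trans_lt hN).le
    rw [div_le_iff₀ hε] at this
    rw [div_le_iff₀ hN']
    linarith
  set c : ℂ := Complex.I * a / N with hc
  refine ⟨C (1 / 2) * ((1 + C c * X) ^ N + (1 + C (-c) * X) ^ N), ?_, ?_, ?_⟩
  · simp only [mul_comp, add_comp, pow_comp, C_comp, one_comp, X_comp, C_neg, neg_comp]
    ring
  · intro z hz h
    exfalso
    apply hz
    simp only [eval_mul, eval_C, eval_add, eval_pow, eval_one, eval_X] at h
    have h1 : (1 + c * z) ^ N = -(1 + -c * z) ^ N := by linear_combination 2 * h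
    have h2 := congrArg norm h1
    rw [norm_neg, norm_pow, norm_pow] at h2
    have h3 := (pow_left_inj₀ (norm_nonneg _) (norm_nonneg _) hN0.ne').1 h2
    have h4 := congrArg (fun x => x ^ 2) h3
    simp only [Complex.sq_norm, Complex.normSq_apply] at h4
    have hcz : c = ((a / N : ℝ) : ℂ) * Complex.I := by
      rw [hc]
      push_cast
      ring
    rw [hcz] at h4
    simp only [Complex.add_re, Complex.add_im, Complex.mul_re, Complex.mul_im, Complex.neg_re,
      Complex.neg_im, Complex.ofReal_re, Complex.ofReal_im, Complex.I_re, Complex.I_im,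
      Complex.one_re, Complex.one_im] at h4
    have h5 : a / N * z.im = 0 := by linarith
    exact (mul_eq_zero.1 h5).resolve_left (by positivity)
  · intro z hz
    have hw : ‖(a * z * Complex.I : ℂ)‖ ≤ A := by
      rw [norm_mul, norm_mul, Complex.norm_I, Complex.norm_real, Real.norm_of_nonneg ha.le, mul_one]
      exact mul_le_mul_of_nonneg_left hz ha.le
    have e1 := norm_one_add_div_pow_sub_exp_le hN0 hNA _ hw
    have e2 := norm_one_add_div_pow_sub_exp_le hN0 hNA (-(a * z) * Complex.I)
      (by rw [neg_mul, norm_neg]; exact hw)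
    simp only [eval_mul, eval_C, eval_add, eval_pow, eval_one, eval_X]
    have : Complex.cos (a * z) - 1 / 2 * ((1 + c * z) ^ N + (1 + -c * z) ^ N)
        = 1 / 2 * ((Complex.exp (a * z * Complex.I) - (1 + a * z * Complex.I / N) ^ N)
          + (Complex.exp (-(a * z) * Complex.I) - (1 + -(a * z) * Complex.I / N) ^ N)) := by
      have i1 : a * z * Complex.I / N = c * z := by rw [hc]; ring
      have i2 : -(a * z) * Complex.I / N = -c * z := by rw [hc]; ring
      rw [Complex.cos, i1, i2]
      ring
    rw [this, norm_mul]
    have h3 := (norm_add_le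
      (Complex.exp (a * z * Complex.I) - (1 + a * z * Complex.I / N) ^ N)
      (Complex.exp (-(a * z) * Complex.I) - (1 + -(a * z) * Complex.I / N) ^ N))
    have h4 : ‖(1 / 2 : ℂ)‖ = 1 / 2 := by norm_num
    rw [h4]
    linarith

/-! ### Finite Fourier transforms -/

/-- The Fourier transform `∫_{-a}^{a} w(t) e^{izt} dt` of a weight on `[-a, a]`. -/
noncomputable def fourierInt (a : ℝ) (w : ℝ → ℂ) (z : ℂ) : ℂ :=
  ∫ t in (-a)..a, w t * Complex.exp (Complex.I * z * t)

lemma hasDerivAt_fourierInt {a : ℝ} (ha : 0 < a) {w : ℝ → ℂ}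
    (hw : IntervalIntegrable w volume (-a) a) (z : ℂ) :
    HasDerivAt (fourierInt a w) (fourierInt a (fun t => Complex.I * t * w t) z) z := by
  have hcont : ∀ x : ℂ, Continuous fun t : ℝ => Complex.exp (Complex.I * x * t) := by
    intro x
    fun_prop
  have hwm : AEStronglyMeasurable w (volume.restrict (Set.uIoc (-a) a)) :=
    (intervalIntegrable_iff.1 hw).aestronglyMeasurable
  refine (intervalIntegral.hasDerivAt_integral_of_dominated_loc_of_deriv_le
    (F := fun (x : ℂ) (t : ℝ) => w t * Complex.exp (Complex.I * x * t))
    (F' := fun (x : ℂ) (t : ℝ) => Complex.I * t * w t * Complex.exp (Complex.I * x * t))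
    (bound := fun t => ‖w t‖ * (a * Real.exp ((‖z‖ + 1) * a)))
    (s := Metric.ball z 1) (Metric.ball_mem_nhds z one_pos) ?_ ?_ ?_ ?_ ?_ ?_).2
  · exact Eventually.of_forall fun x => hwm.mul (hcont x).aestronglyMeasurable
  · exact hw.mul_continuousOn (hcont z).continuousOn
  · refine AEStronglyMeasurable.mul (AEStronglyMeasurable.mul ?_ hwm)
      (hcont z).aestronglyMeasurable
    exact Continuous.aestronglyMeasurable (by fun_prop)
  · refine Eventually.of_forall fun t ht x hx => ?_
    rw [Set.uIoc_of_le (by linarith)] at ht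
    have hta : |t| ≤ a := abs_le.2 ⟨ht.1.le, ht.2⟩
    have hx' : ‖x‖ ≤ ‖z‖ + 1 := by
      have : ‖x - z‖ < 1 := by simpa [dist_eq_norm] using hx
      calc ‖x‖ = ‖z + (x - z)‖ := by ring_nf
        _ ≤ ‖z‖ + ‖x - z‖ := norm_add_le _ _
        _ ≤ ‖z‖ + 1 := by linarith
    have he : ‖Complex.exp (Complex.I * x * t)‖ ≤ Real.exp ((‖z‖ + 1) * a) := by
      refine (Complex.norm_exp_le_exp_norm _).trans (Real.exp_le_exp.2 ?_)
      rw [norm_mul, norm_mul, Complex.norm_I, one_mul, Complex.norm_real, Real.norm_eq_abs]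
      gcongr
    calc ‖Complex.I * t * w t * Complex.exp (Complex.I * x * t)‖
        = ‖w t‖ * (|t| * ‖Complex.exp (Complex.I * x * t)‖) := by
          rw [norm_mul, norm_mul, norm_mul, Complex.norm_I, Complex.norm_real, Real.norm_eq_abs]
          ring
      _ ≤ _ := by gcongr
  · exact hw.norm.mul_const _
  · refine Eventually.of_forall fun t _ x _ => ?_
    have h1 : HasDerivAt (fun x : ℂ => Complex.I * x * t) (Complex.I * t) x := by
      simpa using ((hasDerivAt_id x).const_mul Complex.I).mul_const (t : ℂ)
    exact (h1.cexp.const_mul (w t)).congr_deriv (by ring)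

lemma differentiable_fourierInt {a : ℝ} (ha : 0 < a) {w : ℝ → ℂ}
    (hw : IntervalIntegrable w volume (-a) a) : Differentiable ℂ (fourierInt a w) :=
  fun z => (hasDerivAt_fourierInt ha hw z).differentiableAt

lemma deriv_fourierInt {a : ℝ} (ha : 0 < a) {w : ℝ → ℂ} (hw : Continuous w) :
    deriv (fourierInt a w) = fourierInt a fun t => Complex.I * t * w t :=
  funext fun z => (hasDerivAt_fourierInt ha (hw.intervalIntegrable _ _) z).deriv

/-- Multiplying the weight by `t² + ρ²` applies `ρ² - D²` to the transform. -/
lemma EvenLP.fourierInt_sq_add {a : ℝ} (ha : 0 < a) {w : ℝ → ℂ} (hw : Continuous w)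
    (h : EvenLP (fourierInt a w)) (ρ : ℝ) :
    EvenLP (fourierInt a fun t => ((t : ℂ) ^ 2 + (ρ : ℂ) ^ 2) * w t) := by
  have key := h.sub_deriv_deriv ρ
  rw [deriv_fourierInt ha hw, deriv_fourierInt ha (by fun_prop)] at key
  convert key using 1
  funext z
  simp only [fourierInt]
  rw [← intervalIntegral.integral_const_mul, ← intervalIntegral.integral_sub]
  · congr 1
    funext t
    linear_combination ((t : ℂ) ^ 2 * w t * Complex.exp (Complex.I * z * t)) * Complex.I_sq
  · exact Continuous.intervalIntegrable (by fun_prop) _ _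
  · exact Continuous.intervalIntegrable (by fun_prop) _ _

/-- The polynomials all of whose zeros are real and nonpositive; `s` belongs to this class
precisely when the zeros of `s (t²)` are purely imaginary. -/
def NonposRooted (s : ℂ[X]) : Prop :=
  ∀ r : ℂ, s.eval r = 0 → r.im = 0 ∧ r.re ≤ 0

lemma EvenLP.fourierInt_multiset {a : ℝ} (ha : 0 < a) (M : Multiset ℂ)
    (hM : ∀ r ∈ M, r.im = 0 ∧ r.re ≤ 0) {w : ℝ → ℂ} (hw : Continuous w)
    (h : EvenLP (fourierInt a w)) :
    (Continuous fun t : ℝ => (M.map fun r => (t : ℂ) ^ 2 - r).prod * w t) ∧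
    EvenLP (fourierInt a fun t => (M.map fun r => (t : ℂ) ^ 2 - r).prod * w t) := by
  induction M using Multiset.induction_on with
  | empty => simpa using ⟨hw, h⟩
  | cons r M ih =>
    obtain ⟨hc, hE⟩ := ih fun r hr => hM r (Multiset.mem_cons_of_mem hr)
    obtain ⟨hr1, hr2⟩ := hM r (Multiset.mem_cons_self r M)
    have hr : r = -((Real.sqrt (-r.re) : ℝ) : ℂ) ^ 2 := by
      rw [← Complex.ofReal_pow, Real.sq_sqrt (by linarith)]
      apply Complex.ext <;> simp [hr1]
    have hfun : (fun t : ℝ => ((r ::ₘ M).map fun r => (t : ℂ) ^ 2 - r).prod * w t)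
        = fun t : ℝ => ((t : ℂ) ^ 2 + ((Real.sqrt (-r.re) : ℝ) : ℂ) ^ 2) *
          ((M.map fun r => (t : ℂ) ^ 2 - r).prod * w t) := by
      funext t
      rw [Multiset.map_cons, Multiset.prod_cons, mul_assoc]
      congr 1
      linear_combination -hr
    rw [hfun]
    exact ⟨by fun_prop, EvenLP.fourierInt_sq_add ha hc hE _⟩

lemma EvenLP.fourierInt_nonposRooted {a : ℝ} (ha : 0 < a) {s : ℂ[X]}
    (hs : s ≠ 0 → NonposRooted s) {w : ℝ → ℂ} (hw : Continuous w) (h : EvenLP (fourierInt a w)) :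
    EvenLP (fourierInt a fun t => s.eval ((t : ℂ) ^ 2) * w t) := by
  have hM : ∀ r ∈ s.roots, r.im = 0 ∧ r.re ≤ 0 := fun r hr =>
    hs (ne_zero_of_mem_roots hr) r ((mem_roots (ne_zero_of_mem_roots hr)).1 hr)
  have := (EvenLP.fourierInt_multiset ha s.roots hM hw h).2.const_mul s.leadingCoeff
  convert this using 1
  funext z
  simp only [fourierInt]
  rw [← intervalIntegral.integral_const_mul]
  congr 1
  funext t
  rw [(IsAlgClosed.splits s).eval_eq_prod_roots]
  ring

/-- By the Gauss–Lucas theorem. -/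
lemma NonposRooted.derivative {s : ℂ[X]} (hs : NonposRooted s) (h0 : derivative s ≠ 0) :
    NonposRooted (derivative s) := by
  intro r hr
  have hdeg : 0 < s.degree := by
    rw [← natDegree_pos_iff_degree_pos]
    by_contra h
    exact h0 (derivative_of_natDegree_zero (by omega))
  have hconv : Convex ℝ {r : ℂ | r.im = 0 ∧ r.re ≤ 0} := by
    intro x hx y hy α β hα hβ _
    simp only [Set.mem_ofPred_eq, Complex.add_im, Complex.add_re, Complex.real_smul,
      Complex.re_ofReal_mul, Complex.im_ofReal_mul] at *
    refine ⟨by simp [hx.1, hy.1], ?_⟩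
    nlinarith [mul_nonneg hα (neg_nonneg.2 hx.2), mul_nonneg hβ (neg_nonneg.2 hy.2)]
  have hmem : r ∈ (Polynomial.derivative s).rootSet ℂ := by
    rw [mem_rootSet, coe_aeval_eq_eval]
    exact ⟨h0, hr⟩
  refine convexHull_min ?_ hconv (rootSet_derivative_subset_convexHull_rootSet hdeg hmem)
  intro x hx
  rw [mem_rootSet, coe_aeval_eq_eval] at hx
  exact hs x hx.2

lemma evenLP_fourierInt_one {a : ℝ} (ha : 0 < a) : EvenLP (fourierInt a fun _ => 1) := by
  have hda : ∀ z, deriv (fun z : ℂ => Complex.cos (a * z)) z = -Complex.sin (a * z) * a := by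
    intro z
    have h1 : HasDerivAt (fun z : ℂ => (a : ℂ) * z) a z := by
      simpa using (hasDerivAt_id z).const_mul (a : ℂ)
    exact h1.ccos.deriv
  have hac : (a : ℂ) ≠ 0 := by exact_mod_cast ha.ne'
  refine (evenLP_cos ha).of_mul_eq_deriv
    (differentiable_fourierInt ha (continuous_const.intervalIntegrable _ _)) (-(2 / a)) fun z => ?_
  rw [hda]
  rcases eq_or_ne z 0 with rfl | hz
  · simp
  have hI : Complex.I * z ≠ 0 := mul_ne_zero Complex.I_ne_zero hz
  simp only [fourierInt, one_mul]
  rw [integral_exp_mul_complex hI, Complex.sin]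
  push_cast
  have e1 : Complex.I * z * -(a : ℂ) = -(a * z) * Complex.I := by ring
  have e2 : Complex.I * z * (a : ℂ) = a * z * Complex.I := by ring
  rw [e1, e2]
  generalize Complex.exp (-((a : ℂ) * z) * Complex.I) = A
  generalize Complex.exp ((a : ℂ) * z * Complex.I) = B
  field_simp
  linear_combination (B - A) * Complex.I_sq

/-- The inductive step integrates by parts: with `u = s (a²) - s (t²)`,
`z ∫ u^(k+1) e^{izt} dt` is a multiple of `d/dz ∫ s' (t²) u^k e^{izt} dt`. -/
lemma evenLP_fourierInt_pow {a : ℝ} (ha : 0 < a) {s : ℂ[X]} (hs : NonposRooted s) (k : ℕ) :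
    EvenLP (fourierInt a fun t => (s.eval ((a : ℂ) ^ 2) - s.eval ((t : ℂ) ^ 2)) ^ k) := by
  induction k with
  | zero => simpa using evenLP_fourierInt_one ha
  | succ k ih =>
    have hcs : ∀ s : ℂ[X], Continuous fun t : ℝ => s.eval ((t : ℂ) ^ 2) := fun s =>
      s.continuous.comp (by fun_prop)
    have hc1 := hcs s
    have hc2 := hcs (derivative s)
    have hf := EvenLP.fourierInt_nonposRooted (s := derivative s) ha
      (fun h0 => hs.derivative h0) (by fun_prop) ih
    refine hf.of_mul_eq_deriv (differentiable_fourierInt ha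
      (Continuous.intervalIntegrable (by fun_prop) _ _)) (-(2 * (k + 1))) fun z => ?_
    rw [deriv_fourierInt ha (by fun_prop)]
    have hu : ∀ t ∈ Set.uIcc (-a) a, HasDerivAt
        (fun t : ℝ => (s.eval ((a : ℂ) ^ 2) - s.eval ((t : ℂ) ^ 2)) ^ (k + 1))
        ((k + 1) * (s.eval ((a : ℂ) ^ 2) - s.eval ((t : ℂ) ^ 2)) ^ k *
          (-((derivative s).eval ((t : ℂ) ^ 2) * (2 * t)))) t := by
      intro t _
      have h0 : HasDerivAt (fun x : ℂ => x ^ 2) (2 * t) (t : ℂ) := by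
        simpa using hasDerivAt_pow 2 (t : ℂ)
      have h1 := (((s.hasDerivAt ((t : ℂ) ^ 2)).comp (t : ℂ) h0).const_sub
        (s.eval ((a : ℂ) ^ 2))).fun_pow (k + 1)
      simpa using h1.comp_ofReal
    have hv : ∀ t ∈ Set.uIcc (-a) a, HasDerivAt
        (fun t : ℝ => Complex.exp (Complex.I * z * t))
        (Complex.I * z * Complex.exp (Complex.I * z * t)) t := by
      intro t _
      have h1 : HasDerivAt (fun x : ℂ => Complex.I * z * x) (Complex.I * z) (t : ℂ) := by
        simpa using (hasDerivAt_id (t : ℂ)).const_mul (Complex.I * z)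
      exact h1.cexp.comp_ofReal.congr_deriv (mul_comm _ _)
    have hparts := intervalIntegral.integral_mul_deriv_eq_deriv_mul hu hv
      (Continuous.intervalIntegrable (by fun_prop) _ _)
      (Continuous.intervalIntegrable (by fun_prop) _ _)
    simp only [Complex.ofReal_neg, neg_sq, sub_self, ne_eq, Nat.succ_ne_zero, not_false_eq_true,
      zero_pow, zero_mul, zero_sub] at hparts
    have hL : z * fourierInt a
        (fun t => (s.eval ((a : ℂ) ^ 2) - s.eval ((t : ℂ) ^ 2)) ^ (k + 1)) z
        = -Complex.I * ∫ t in (-a)..a, (s.eval ((a : ℂ) ^ 2) - s.eval ((t : ℂ) ^ 2)) ^ (k + 1) *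
          (Complex.I * z * Complex.exp (Complex.I * z * t)) := by
      rw [fourierInt, ← intervalIntegral.integral_const_mul, ← intervalIntegral.integral_const_mul]
      congr 1
      funext t
      linear_combination (z * (s.eval ((a : ℂ) ^ 2) - s.eval ((t : ℂ) ^ 2)) ^ (k + 1) *
        Complex.exp (Complex.I * z * t)) * Complex.I_sq
    rw [hL, hparts, fourierInt, ← intervalIntegral.integral_neg,
      ← intervalIntegral.integral_const_mul, ← intervalIntegral.integral_const_mul]
    congr 1
    funext t
    ring

/-! ### Passage to the limit -/

/-- A pointwise limit of transforms in `EvenLP` still has modulus nondecreasing in `|Im z|`. A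
nonreal zero would thus produce a vertical segment of zeros, contradicting positivity at `0`. -/
lemma im_eq_zero_of_tendsto {ι : Type*} {l : Filter ι} [l.NeBot] [l.IsCountablyGenerated]
    {a : ℝ} (ha : 0 < a) {s : ι → ℂ[X]} (hs : ∀ᶠ i in l, NonposRooted (s i)) {Q : ι → ℝ → ℝ}
    (hev : ∀ i (t : ℝ), (s i).eval ((t : ℂ) ^ 2) = Q i t) (hc : ∀ i, Continuous (Q i))
    (hnn : ∀ i t, 0 ≤ Q i t) (hle : ∀ i t, |t| ≤ a → Q i t ≤ (t / a) ^ 2 * Q i a)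
    {q : ℝ → ℝ} (hlim : ∀ t, Tendsto (fun i => Q i t) l (𝓝 (q t))) (hpos : 0 < q a) (j : ℕ)
    {z : ℂ} (hz : fourierInt a (fun t => (((q a - q t) ^ j : ℝ) : ℂ)) z = 0) : z.im = 0 := by
  have hqnn : ∀ t, 0 ≤ q t := fun t => ge_of_tendsto' (hlim t) fun i => hnn i t
  have hqle : ∀ t, |t| ≤ a → q t ≤ (t / a) ^ 2 * q a := fun t ht =>
    le_of_tendsto_of_tendsto' (hlim t) ((hlim a).const_mul _) fun i => hle i t ht
  have hsq : ∀ t, |t| ≤ a → (t / a) ^ 2 ≤ 1 := by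
    intro t ht
    rw [← sq_abs, abs_div, abs_of_pos ha]
    exact pow_le_one₀ (by positivity) ((div_le_one ha).2 ht)
  have hqa : ∀ t, |t| ≤ a → q t ≤ q a := fun t ht =>
    (hqle t ht).trans (mul_le_of_le_one_left hpos.le (hsq t ht))
  have hQa : ∀ i t, |t| ≤ a → Q i t ≤ Q i a := fun i t ht =>
    (hle i t ht).trans (mul_le_of_le_one_left (hnn i a) (hsq t ht))
  have habs : ∀ t ∈ Set.uIoc (-a) a, |t| ≤ a := by
    intro t ht
    rw [Set.uIoc_of_le (by linarith)] at ht
    exact abs_le.2 ⟨ht.1.le, ht.2⟩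
  have hqm : AEStronglyMeasurable q (volume.restrict (Set.uIoc (-a) a)) :=
    aestronglyMeasurable_of_tendsto_ae l (fun i => (hc i).aestronglyMeasurable)
      (Eventually.of_forall hlim)
  have hrint : IntervalIntegrable (fun t => (q a - q t) ^ j) volume (-a) a := by
    refine (intervalIntegrable_const (c := q a ^ j)).mono_fun
      ((aestronglyMeasurable_const.sub hqm).pow j) ?_
    refine (ae_restrict_iff' measurableSet_uIoc).2 (Eventually.of_forall fun t ht => ?_)
    have h1 := hqa t (habs t ht)
    beta_reduce
    rw [Real.norm_of_nonneg (pow_nonneg (by linarith) _), Real.norm_of_nonneg (by positivity)]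
    exact pow_le_pow_left₀ (by linarith) (by linarith [hqnn t]) _
  have hcint : IntervalIntegrable (fun t => (((q a - q t) ^ j : ℝ) : ℂ)) volume (-a) a :=
    ⟨hrint.1.ofReal, hrint.2.ofReal⟩
  set G := fourierInt a fun t => (((q a - q t) ^ j : ℝ) : ℂ) with hG
  have hGdiff : Differentiable ℂ G := differentiable_fourierInt ha hcint
  have hconv : ∀ w, Tendsto (fun i => fourierInt a
      (fun t => ((s i).eval ((a : ℂ) ^ 2) - (s i).eval ((t : ℂ) ^ 2)) ^ j) w) l (𝓝 (G w)) := by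
    intro w
    refine intervalIntegral.tendsto_integral_filter_of_dominated_convergence
      (fun t => (q a + 1) ^ j * ‖Complex.exp (Complex.I * w * t)‖) ?_ ?_ ?_ ?_
    · refine Eventually.of_forall fun i => Continuous.aestronglyMeasurable ?_
      have := hc i
      simp only [hev]
      fun_prop
    · filter_upwards [(hlim a).eventually (gt_mem_nhds (lt_add_one (q a)))] with i hi
      refine Eventually.of_forall fun t ht => ?_
      have h1 := hQa i t (habs t ht)
      have h2 := hnn i t
      rw [hev, hev, norm_mul, norm_pow, ← Complex.ofReal_sub, Complex.norm_real,
        Real.norm_of_nonneg (by linarith)]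
      have h3 : 0 ≤ Q i a - Q i t := by linarith
      gcongr
      linarith
    · exact Continuous.intervalIntegrable (by fun_prop) _ _
    · refine Eventually.of_forall fun t _ => Tendsto.mul_const _ ?_
      simp only [hev]
      simp only [← Complex.ofReal_sub, ← Complex.ofReal_pow]
      exact (Complex.continuous_ofReal.tendsto _).comp (((hlim a).sub (hlim t)).pow j)
  have hmono : ∀ w : ℂ, w.re = z.re → |w.im| ≤ |z.im| → ‖G w‖ ≤ ‖G z‖ := by
    intro w hre him
    refine le_of_tendsto_of_tendsto (hconv w).norm (hconv z).norm ?_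
    filter_upwards [hs] with i hi
    exact (evenLP_fourierInt_pow ha hi j).norm_le hre him
  by_contra him
  have hzero : ∀ y : ℝ, |y| ≤ |z.im| → G (z.re + y * Complex.I) = 0 := by
    intro y hy
    have := hmono (z.re + y * Complex.I) (by simp) (by simpa using hy)
    rw [hz, norm_zero] at this
    exact norm_le_zero_iff.1 this
  have hGz : G = 0 := by
    refine AnalyticOnNhd.eq_of_frequently_eq (z₀ := (z.re : ℂ)) (fun w _ => hGdiff.analyticAt w)
      (fun w _ => analyticAt_const) ?_
    have htend : Tendsto (fun y : ℝ => (z.re : ℂ) + y * Complex.I) (𝓝[≠] 0)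
        (𝓝[≠] (z.re : ℂ)) := by
      refine tendsto_nhdsWithin_iff.2 ⟨?_, ?_⟩
      · have : Continuous fun y : ℝ => (z.re : ℂ) + y * Complex.I := by fun_prop
        simpa using (this.tendsto 0).mono_left nhdsWithin_le_nhds
      · filter_upwards [self_mem_nhdsWithin] with y hy
        simpa using hy
    refine htend.frequently (Eventually.frequently ?_)
    have : ∀ᶠ y : ℝ in 𝓝 0, |y| < |z.im| :=
      (continuous_abs.tendsto' (0 : ℝ) 0 abs_zero).eventually (gt_mem_nhds (abs_pos.2 him))
    filter_upwards [nhdsWithin_le_nhds this] with y hy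
    exact hzero y hy.le
  have hG0 : G 0 = ((∫ t in (-a)..a, (q a - q t) ^ j : ℝ) : ℂ) := by
    rw [hG, fourierInt, ← intervalIntegral.integral_ofReal]
    simp
  have hGpos : 0 < ∫ t in (-a)..a, (q a - q t) ^ j := by
    refine intervalIntegral.intervalIntegral_pos_of_pos_on hrint (fun t ht => ?_) (by linarith)
    have ht' : |t| < a := abs_lt.2 ht
    have h1 : (t / a) ^ 2 < 1 := by
      rw [← sq_abs, abs_div, abs_of_pos ha]
      exact pow_lt_one₀ (by positivity) ((div_lt_one ha).2 ht') two_ne_zero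
    have h2 := hqle t ht'.le
    have h3 : (t / a) ^ 2 * q a < q a := mul_lt_of_lt_one_left hpos h1
    exact pow_pos (by linarith) _
  rw [hGz, Pi.zero_apply] at hG0
  exact hGpos.ne' (by exact_mod_cast hG0.symm)

/-! ### Polynomial approximation of functions of class Q -/

lemma nonposRooted_linear {c : ℝ} (hc : 0 ≤ c) : NonposRooted (1 + C (c : ℂ) * X) := by
  intro r hr
  simp only [eval_add, eval_one, eval_mul, eval_C, eval_X] at hr
  have h1 := congrArg Complex.re hr
  have h2 := congrArg Complex.im hr
  simp at h1 h2
  have hc0 : c ≠ 0 := by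
    rintro rfl
    simp at h1
  have hcpos : 0 < c := lt_of_le_of_ne hc hc0.symm
  refine ⟨h2.resolve_left hc0, ?_⟩
  by_contra h
  nlinarith [mul_pos hcpos (not_le.1 h)]

lemma NonposRooted.mul {p r : ℂ[X]} (hp : NonposRooted p) (hr : NonposRooted r) :
    NonposRooted (p * r) := by
  intro x hx
  rw [eval_mul, mul_eq_zero] at hx
  exact hx.elim (hp x) (hr x)

lemma nonposRooted_C {c : ℂ} (hc : c ≠ 0) : NonposRooted (C c) := by
  intro x hx
  rw [eval_C] at hx
  exact absurd hx hc

lemma NonposRooted.pow {p : ℂ[X]} (hp : NonposRooted p) (N : ℕ) : NonposRooted (p ^ N) := by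
  intro x hx
  rw [eval_pow] at hx
  exact hp x (eq_zero_of_pow_eq_zero hx)

lemma nonposRooted_X : NonposRooted X := by
  intro x hx
  rw [eval_X] at hx
  simp [hx]

lemma nonposRooted_prod {ι : Type*} (F : Finset ι) {p : ι → ℂ[X]}
    (hp : ∀ i ∈ F, NonposRooted (p i)) : NonposRooted (∏ i ∈ F, p i) := by
  intro x hx
  rw [eval_prod, Finset.prod_eq_zero_iff] at hx
  obtain ⟨i, hi, hix⟩ := hx
  exact hp i hi x hix

end ClassQ

open ClassQ

/-- Every zero of `Gₙ(z) = ∫_{-λₙ}^{λₙ} (n/(n+1))·(1 - q(t)/n)^{n+1} e^{izt} dt` is real,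
where `λₙ > 0` is the unique positive root of `q(t) = n`. -/
theorem zeros_real_Gn (q : ℝ → ℝ) (hq : IsClassQ q) (n : ℕ) (hn : 0 < n)
    (lam : ℝ) (hlam : 0 < lam) (hqlam : q lam = n) (z : ℂ)
    (hz : (∫ t in (-lam)..lam,
      ((((n : ℝ) / (n + 1)) * (1 - q t / n) ^ (n + 1) : ℝ) : ℂ) *
        Complex.exp (Complex.I * z * t)) = 0) :
    z.im = 0 := by
  obtain ⟨k, m, μ, S, β, hk, hm, hμ, -, hsum, hqe, -⟩ := hq
  have hn' : (0 : ℝ) < n := by exact_mod_cast hn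
  -- Truncate the product to a finite set and replace `e^{μ t²}` by `(1 + μ t² / N) ^ N`.
  let s : Finset S × ℕ → ℂ[X] := fun i =>
    C (k : ℂ) * X ^ m * (1 + C ((μ / i.2 : ℝ) : ℂ) * X) ^ i.2 *
      ∏ j ∈ i.1, (1 + C ((1 / β j ^ 2 : ℝ) : ℂ) * X)
  let Q : Finset S × ℕ → ℝ → ℝ := fun i t =>
    k * (t ^ 2) ^ m * (1 + μ / i.2 * t ^ 2) ^ i.2 * ∏ j ∈ i.1, (1 + 1 / β j ^ 2 * t ^ 2)
  refine im_eq_zero_of_tendsto (l := (atTop : Filter (Finset S)) ×ˢ (atTop : Filter ℕ))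
    hlam (s := s) (Q := Q) ?_ ?_ ?_ ?_ ?_ (q := q) ?_ (by rw [hqlam]; exact hn') (n + 1) ?_
  · refine Eventually.of_forall fun i => ?_
    exact (((nonposRooted_C (by exact_mod_cast hk.ne')).mul (nonposRooted_X.pow m)).mul
      ((nonposRooted_linear (by positivity)).pow _)).mul
      (nonposRooted_prod _ fun j _ => nonposRooted_linear (by positivity))
  · intro i t
    simp only [s, Q, eval_mul, eval_C, eval_pow, eval_X, eval_add, eval_one, eval_prod]
    push_cast
    rfl
  · intro i
    fun_prop
  · intro i t
    have : 0 ≤ ∏ j ∈ i.1, (1 + 1 / β j ^ 2 * t ^ 2) := Finset.prod_nonneg fun j _ => by positivity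
    positivity
  · intro i t ht
    have htl : t ^ 2 ≤ lam ^ 2 := by
      rw [← sq_abs t]
      exact pow_le_pow_left₀ (abs_nonneg t) ht 2
    have hpow : (t ^ 2) ^ m ≤ (t / lam) ^ 2 * (lam ^ 2) ^ m := by
      have e : t ^ 2 = (t / lam) ^ 2 * lam ^ 2 := by field_simp
      have h1 : (t / lam) ^ 2 ≤ 1 := by
        rw [div_pow]
        exact (div_le_one (by positivity)).2 htl
      calc (t ^ 2) ^ m = ((t / lam) ^ 2) ^ m * (lam ^ 2) ^ m := by rw [← mul_pow, ← e]
        _ ≤ (t / lam) ^ 2 * (lam ^ 2) ^ m := by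
          gcongr
          exact pow_le_of_le_one (by positivity) h1 hm.ne'
    have hprod0 : 0 ≤ ∏ j ∈ i.1, (1 + 1 / β j ^ 2 * t ^ 2) :=
      Finset.prod_nonneg fun j _ => by positivity
    have hprod : ∏ j ∈ i.1, (1 + 1 / β j ^ 2 * t ^ 2)
        ≤ ∏ j ∈ i.1, (1 + 1 / β j ^ 2 * lam ^ 2) :=
      Finset.prod_le_prod (fun j _ => by positivity) fun j _ => by gcongr
    calc Q i t ≤ k * ((t / lam) ^ 2 * (lam ^ 2) ^ m) * (1 + μ / i.2 * lam ^ 2) ^ i.2 *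
          ∏ j ∈ i.1, (1 + 1 / β j ^ 2 * lam ^ 2) := by
          simp only [Q]
          gcongr
      _ = (t / lam) ^ 2 * Q i lam := by
          simp only [Q]
          ring
  · intro t
    have hmul : Multipliable fun j : S => 1 + t ^ 2 / β j ^ 2 := by
      apply Real.multipliable_one_add_of_summable
      simpa [div_eq_mul_inv] using hsum.mul_left (t ^ 2)
    have h0 : Tendsto (fun F : Finset S => ∏ j ∈ F, (1 + t ^ 2 / β j ^ 2)) atTop
        (𝓝 (∏' j : S, (1 + t ^ 2 / β j ^ 2))) := by
      simpa only [HasProd, SummationFilter.unconditional_filter] using hmul.hasProd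
    have h1 : Tendsto (fun i : Finset S × ℕ => ∏ j ∈ i.1, (1 + t ^ 2 / β j ^ 2))
        (atTop ×ˢ atTop) (𝓝 (∏' j : S, (1 + t ^ 2 / β j ^ 2))) :=
      h0.comp tendsto_fst
    have h2 : Tendsto (fun i : Finset S × ℕ => (1 + μ * t ^ 2 / i.2) ^ i.2)
        (atTop ×ˢ atTop) (𝓝 (Real.exp (μ * t ^ 2))) :=
      (Real.tendsto_one_add_div_pow_exp (μ * t ^ 2)).comp tendsto_snd
    rw [hqe t]
    refine ((h2.const_mul (k * t ^ (2 * m))).mul h1).congr fun i => ?_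
    simp only [Q, pow_mul]
    congr 1
    · congr 3
      ring
    · refine Finset.prod_congr rfl fun j _ => ?_
      ring
  · have hconst : ((n : ℝ) / (n + 1) / n ^ (n + 1) : ℝ) ≠ 0 := by positivity
    have hfac : (∫ t in (-lam)..lam,
        ((((n : ℝ) / (n + 1)) * (1 - q t / n) ^ (n + 1) : ℝ) : ℂ) *
          Complex.exp (Complex.I * z * t)) = (((n : ℝ) / (n + 1) / n ^ (n + 1) : ℝ) : ℂ) *
        fourierInt lam (fun t => (((q lam - q t) ^ (n + 1) : ℝ) : ℂ)) z := by
      rw [fourierInt, ← intervalIntegral.integral_const_mul]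
      congr 1
      funext t
      rw [← mul_assoc, ← Complex.ofReal_mul, hqlam]
      congr 2
      have : 1 - q t / n = (n - q t) / n := by field_simp
      rw [this, div_pow]
      ring
    rw [hfac] at hz
    exact (mul_eq_zero.1 hz).resolve_left (by exact_mod_cast hconst)
end

section
/- Let q be a function of class Q and n a positive integer, with λ_n and h_n as defined. Then for every real t with t > 2λ_n one has |h_n(t)| ≤ 2λ_n·e^{-(t-λ_n)^4} ≤ 2λ_n·e^{-(t/2)^4}. -/
/-- Monotonicity of infinite products of reals with nonnegative factors, which form no ordered
monoid; it is passed to the limit from the finite partial products. -/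
lemma tprod_nonneg_and_le {ι : Type*} {f g : ι → ℝ} (hf : Multipliable f) (hg : Multipliable g)
    (h0 : ∀ i, 0 ≤ f i) (hfg : ∀ i, f i ≤ g i) : 0 ≤ ∏' i, f i ∧ ∏' i, f i ≤ ∏' i, g i :=
  ⟨ge_of_tendsto' hf.hasProd fun _ => Finset.prod_nonneg fun i _ => h0 i,
    le_of_tendsto_of_tendsto' hf.hasProd hg.hasProd fun _ =>
      Finset.prod_le_prod (fun i _ => h0 i) fun i _ => hfg i⟩

lemma IsClassQ.nonneg_and_le {q : ℝ → ℝ} (hq : IsClassQ q) {s l : ℝ} (hsl : s ^ 2 ≤ l ^ 2) :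
    0 ≤ q s ∧ q s ≤ q l := by
  obtain ⟨k, m, μ, S, β, hk, -, hμ, -, hsum, hqe, -⟩ := hq
  have hmul : ∀ t : ℝ, Multipliable fun n : S => 1 + t ^ 2 / (β n) ^ 2 := fun t =>
    Real.multipliable_one_add_of_summable
      ((hsum.mul_left (t ^ 2)).congr fun n => by rw [mul_one_div])
  obtain ⟨h0, h1⟩ := tprod_nonneg_and_le (hmul s) (hmul l) (fun n => by positivity)
    (fun n => by gcongr)
  rw [hqe s, hqe l, pow_mul, pow_mul]
  refine ⟨by positivity, ?_⟩
  gcongr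


/-- For `q` of class Q, `n ≥ 1`, `λₙ` the unique positive root of `q(t) = n`, and
`hₙ(t) = ∫ gₙ(v) e^{-(t-v)⁴} dv`, one has
`|hₙ(t)| ≤ 2λₙ·e^{-(t-λₙ)⁴} ≤ 2λₙ·e^{-(t/2)⁴}` whenever `t > 2λₙ`. -/
theorem hn_decay (q : ℝ → ℝ) (hq : IsClassQ q) (n : ℕ) (hn : 0 < n)
    (lam : ℝ) (hlam : 0 < lam) (hqlam : q lam = n)
    (g : ℝ → ℝ)
    (hg : ∀ t : ℝ, g t = Set.indicator (Set.Icc (-lam) lam)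
      (fun s : ℝ => ((n : ℝ) / (n + 1)) * (1 - q s / n) ^ (n + 1)) t)
    (h : ℝ → ℝ) (hh : ∀ t : ℝ, h t = ∫ v : ℝ, g v * Real.exp (-(t - v) ^ 4))
    (t : ℝ) (ht : 2 * lam < t) :
    |h t| ≤ 2 * lam * Real.exp (-(t - lam) ^ 4) ∧
    2 * lam * Real.exp (-(t - lam) ^ 4) ≤ 2 * lam * Real.exp (-(t / 2) ^ 4) := by
  have hn' : (0 : ℝ) < n := by exact_mod_cast hn
  constructor
  · have hind : (fun v => g v * Real.exp (-(t - v) ^ 4)) =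
        Set.indicator (Set.Icc (-lam) lam) (fun v =>
          ((n : ℝ) / (n + 1)) * (1 - q v / n) ^ (n + 1) * Real.exp (-(t - v) ^ 4)) := by
      funext v
      by_cases hv : v ∈ Set.Icc (-lam) lam
      · rw [hg v, Set.indicator_of_mem hv, Set.indicator_of_mem hv]
      · rw [hg v, Set.indicator_of_notMem hv, Set.indicator_of_notMem hv, zero_mul]
    rw [hh t, hind, MeasureTheory.integral_indicator measurableSet_Icc, ← Real.norm_eq_abs]
    have hb : ∀ v ∈ Set.Icc (-lam) lam,
        ‖((n : ℝ) / (n + 1)) * (1 - q v / n) ^ (n + 1) * Real.exp (-(t - v) ^ 4)‖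
          ≤ Real.exp (-(t - lam) ^ 4) := by
      rintro v ⟨hv1, hv2⟩
      obtain ⟨h0, h1⟩ := hq.nonneg_and_le (s := v) (l := lam) (by nlinarith)
      rw [hqlam] at h1
      have hd0 : 0 ≤ q v / n := by positivity
      have hd1 : q v / n ≤ 1 := (div_le_one hn').2 h1
      have hp0 : 0 ≤ (1 - q v / n) ^ (n + 1) := pow_nonneg (by linarith) _
      have hp1 : (1 - q v / n) ^ (n + 1) ≤ 1 := pow_le_one₀ (by linarith) (by linarith)
      have hc1 : (n : ℝ) / (n + 1) ≤ 1 := (div_le_one (by positivity)).2 (by linarith)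
      have he : Real.exp (-(t - v) ^ 4) ≤ Real.exp (-(t - lam) ^ 4) :=
        Real.exp_le_exp.2 (neg_le_neg (pow_le_pow_left₀ (by linarith) (by linarith) 4))
      rw [Real.norm_of_nonneg (by positivity)]
      calc _ ≤ 1 * Real.exp (-(t - v) ^ 4) := by
            gcongr
            exact mul_le_one₀ hc1 hp0 hp1
        _ ≤ _ := by rwa [one_mul]
    refine (MeasureTheory.norm_setIntegral_le_of_norm_le_const (by simp) hb).trans_eq ?_
    rw [Real.volume_real_Icc_of_le (by linarith)]
    ring
  · have h4 : (t / 2) ^ 4 ≤ (t - lam) ^ 4 := pow_le_pow_left₀ (by linarith) (by linarith) 4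
    gcongr
end

section
/- Let f be an entire function with Hadamard factorization f(z) = c·z^N·e^{γz}·∏_k (1 + z/w_k)·e^{-z/w_k}, where c, γ ∈ ℂ, N is a nonnegative integer, and the w_k are nonzero real numbers (finitely or countably many) with ∑_k 1/w_k² < ∞. If f is even (f(-z) = f(z) for all z) and f(0) is real and strictly positive, then N = 0, c = f(0) > 0, and there exists a sequence (α_r) of positive real numbers with ∑_r 1/α_r² < ∞ such that f(z) = c·∏_r (1 - z²/α_r²) for all z ∈ ℂ. -/
/-!
Write `E(u) = (1 + u) e^{-u}`. Evaluating at `0` gives `N = 0` and `c = f 0`. The heart of the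
proof is that the numbers `w k` occur symmetrically: for real `a ≠ 0`, the factors vanishing at
`a` are those with `w k = -a`, and pulling these finitely many factors out of `f z` leaves a
continuous function that does not vanish at `a`; doing the same with `f (-z)`, whose factors
vanishing at `a` are those with `w k = a`, and comparing orders of vanishing shows that `a` and
`-a` are taken equally often (`ncard_fiber_eq`). Hence the indices with `w k > 0` are in bijection
with those with `w k < 0` in a way that negates `w`, and since `E(u) E(-u) = 1 - u²` the product
becomes `∏ (1 - z² / (w k)²)` over the `k` with `w k > 0`. What remains is `f z = c e^{γz} Q(z)`
with `Q` even, continuous and `Q 0 = 1`, so `e^{2γz} = 1` near `0` and `γ = 0`.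
-/

open Filter Topology

/-- The Weierstrass elementary factor of genus one, vanishing at `-1`. -/
noncomputable def elemFactor (u : ℂ) : ℂ := (1 + u) * Complex.exp (-u)

/-- The canonical product of genus one over the indices in `A`, with zeros at the `-w k`. -/
noncomputable def canonProd (w : ℕ → ℝ) (A : Set ℕ) (z : ℂ) : ℂ :=
  ∏' k : A, elemFactor (z / (w k : ℂ))

/-! ### Convergence of the canonical product -/

lemma norm_elemFactor_sub_one_le {u : ℂ} (hu : ‖u‖ ≤ 1) : ‖elemFactor u - 1‖ ≤ 3 * ‖u‖ ^ 2 := by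
  have h := Complex.norm_exp_sub_one_sub_id_le (x := -u) (by simpa using hu)
  rw [norm_neg] at h
  have e : elemFactor u - 1 = -u ^ 2 + (1 + u) * (Complex.exp (-u) - 1 - -u) := by
    unfold elemFactor; ring
  have h1 : ‖1 + u‖ ≤ 2 := (norm_add_le _ _).trans (by rw [norm_one]; linarith)
  calc ‖elemFactor u - 1‖ ≤ ‖-u ^ 2‖ + ‖(1 + u) * (Complex.exp (-u) - 1 - -u)‖ := by
        rw [e]; exact norm_add_le _ _
    _ ≤ ‖u‖ ^ 2 + 2 * ‖u‖ ^ 2 := by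
        rw [norm_neg, norm_pow, norm_mul]
        gcongr
    _ = 3 * ‖u‖ ^ 2 := by ring

section Convergence

variable {w : ℕ → ℝ} {A : Set ℕ}

lemma eventually_norm_le (hA : Summable (fun k : A => 1 / (w k) ^ 2)) (R : ℝ) :
    ∀ᶠ k : A in cofinite, ∀ z ∈ Metric.ball (0 : ℂ) R,
      ‖elemFactor (z / (w k : ℂ)) - 1‖ ≤ 3 * R ^ 2 * (1 / (w k) ^ 2) := by
  have hpos : (0 : ℝ) < 1 / (R ^ 2 + 1) := by positivity
  filter_upwards [hA.tendsto_cofinite_zero.eventually_le_const hpos] with k hk z hz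
  have hz' : ‖z‖ < R := by simpa using hz
  have hzR : ‖z‖ ^ 2 ≤ R ^ 2 := by gcongr
  have hsq : ‖z / (w k : ℂ)‖ ^ 2 = ‖z‖ ^ 2 * (1 / (w k) ^ 2) := by
    rw [norm_div, div_pow, Complex.norm_real, Real.norm_eq_abs, sq_abs]; ring
  have hle : ‖z / (w k : ℂ)‖ ^ 2 ≤ R ^ 2 * (1 / (w k) ^ 2) := by
    rw [hsq]; gcongr
  have hone : R ^ 2 * (1 / (w k) ^ 2) ≤ 1 := by
    calc R ^ 2 * (1 / (w k) ^ 2) ≤ R ^ 2 * (1 / (R ^ 2 + 1)) := by gcongr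
      _ ≤ 1 := by rw [mul_one_div, div_le_one (by positivity)]; linarith
  have h1 : ‖z / (w k : ℂ)‖ ≤ 1 := by
    rw [← sq_le_one_iff₀ (norm_nonneg _)]; exact hle.trans hone
  calc _ ≤ 3 * ‖z / (w k : ℂ)‖ ^ 2 := norm_elemFactor_sub_one_le h1
    _ ≤ 3 * R ^ 2 * (1 / (w k) ^ 2) := by rw [mul_assoc]; gcongr

lemma summable_norm_elemFactor_sub_one (hA : Summable (fun k : A => 1 / (w k) ^ 2)) (z : ℂ) :
    Summable (fun k : A => ‖elemFactor (z / (w k : ℂ)) - 1‖) := by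
  refine (hA.mul_left (3 * (‖z‖ + 1) ^ 2)).of_norm_bounded_eventually ?_
  filter_upwards [eventually_norm_le hA (‖z‖ + 1)] with k hk
  rw [norm_norm]
  exact hk z (by simp)

lemma multipliable_elemFactor (hA : Summable (fun k : A => 1 / (w k) ^ 2)) (z : ℂ) :
    Multipliable (fun k : A => elemFactor (z / (w k : ℂ))) := by
  simpa using multipliable_one_add_of_summable (summable_norm_elemFactor_sub_one hA z)

lemma canonProd_ne_zero (hA : Summable (fun k : A => 1 / (w k) ^ 2)) {z : ℂ}
    (hz : ∀ k ∈ A, elemFactor (z / (w k : ℂ)) ≠ 0) : canonProd w A z ≠ 0 := by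
  have := tprod_one_add_ne_zero_of_summable
    (f := fun k : A => elemFactor (z / (w k : ℂ)) - 1)
    (fun k => by simpa using hz k k.2) (summable_norm_elemFactor_sub_one hA z)
  simpa [canonProd] using this

lemma continuous_elemFactor : Continuous elemFactor := by
  unfold elemFactor; fun_prop

lemma continuous_canonProd (hA : Summable (fun k : A => 1 / (w k) ^ 2)) :
    Continuous (canonProd w A) := by
  have hc : ∀ k : A, Continuous fun z : ℂ => elemFactor (z / (w k : ℂ)) := fun k =>
    continuous_elemFactor.comp (by fun_prop)
  refine continuous_iff_continuousAt.2 fun z => ?_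
  have h := Summable.hasProdLocallyUniformlyOn_one_add (K := Metric.ball (0 : ℂ) (‖z‖ + 1))
    (f := fun (k : A) z => elemFactor (z / (w k : ℂ)) - 1) Metric.isOpen_ball
    (hA.mul_left (3 * (‖z‖ + 1) ^ 2)) (eventually_norm_le hA _)
    (fun k => ((hc k).sub continuous_const).continuousOn)
  simp only [add_sub_cancel] at h
  have hcont := TendstoLocallyUniformlyOn.continuousOn
    (hasProdLocallyUniformlyOn_iff_tendstoLocallyUniformlyOn.1 h)
    (Frequently.of_forall fun s => (continuous_finsetProd s fun k _ => hc k).continuousOn)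
  exact hcont.continuousAt (Metric.isOpen_ball.mem_nhds (by simp))

lemma summable_mono {B : Set ℕ} (hA : Summable (fun k : A => 1 / (w k) ^ 2)) (hB : B ⊆ A) :
    Summable (fun k : B => 1 / (w k) ^ 2) :=
  hA.comp_injective (i := Set.inclusion hB) (Set.inclusion_injective hB)

lemma canonProd_union {B : Set ℕ} (hd : Disjoint A B)
    (hA : Summable (fun k : A => 1 / (w k) ^ 2)) (hB : Summable (fun k : B => 1 / (w k) ^ 2))
    (z : ℂ) : canonProd w (A ∪ B) z = canonProd w A z * canonProd w B z :=
  Multipliable.tprod_union_disjoint (f := fun k : ℕ => elemFactor (z / (w k : ℂ))) hd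
    (multipliable_elemFactor hA z) (multipliable_elemFactor hB z)

lemma canonProd_const {b : ℝ} (hfin : A.Finite) (hb : ∀ k ∈ A, w k = b) (z : ℂ) :
    canonProd w A z = elemFactor (z / (b : ℂ)) ^ A.ncard := by
  have := hfin.fintype
  have h : ∀ k : A, elemFactor (z / (w k : ℂ)) = elemFactor (z / (b : ℂ)) := fun k => by
    rw [hb k k.2]
  rw [canonProd, tprod_congr h, tprod_fintype, Finset.prod_const, Finset.card_univ,
    Set.ncard_eq_toFinset_card', Set.toFinset_card]

end Convergence

/-! ### Symmetry of the zeros -/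

lemma elemFactor_eq_zero_iff {u : ℂ} : elemFactor u = 0 ↔ u = -1 := by
  rw [elemFactor, mul_eq_zero, or_iff_left (Complex.exp_ne_zero _), add_comm,
    add_eq_zero_iff_eq_neg]

lemma elemFactor_mul_neg (u : ℂ) : elemFactor u * elemFactor (-u) = 1 - u ^ 2 := by
  have h : Complex.exp (-u) * Complex.exp u = 1 := by rw [← Complex.exp_add]; simp
  simp only [elemFactor, neg_neg]
  linear_combination (1 - u ^ 2) * h

/-- If `b` vanishes exactly at `p` and `b ^ n * G` has order `n` there (as `G p ≠ 0`), then
no further power of `b` can be extracted with a continuous cofactor. -/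
lemma order_le {b G H : ℂ → ℂ} {p : ℂ} {n m : ℕ} (hb : Continuous b) (hG : Continuous G)
    (hH : Continuous H) (hb0 : ∀ z, b z = 0 ↔ z = p) (hGp : G p ≠ 0)
    (h : ∀ z, b z ^ n * G z = b z ^ m * H z) : m ≤ n := by
  by_contra! hlt
  have hE : ∀ z ∈ ({p}ᶜ : Set ℂ), G z = b z ^ (m - n) * H z := fun z hz => by
    have hbz : b z ^ n ≠ 0 := pow_ne_zero _ (mt (hb0 z).1 hz)
    apply mul_left_cancel₀ hbz
    rw [h z, ← mul_assoc, ← pow_add, Nat.add_sub_cancel' hlt.le]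
  have hEq : G = fun z => b z ^ (m - n) * H z :=
    Continuous.ext_on (dense_compl_singleton p) hG (by fun_prop) hE
  apply hGp
  rw [hEq]
  simp [(hb0 p).2 rfl, Nat.sub_ne_zero_of_lt hlt]

/-- Comparison of the orders of vanishing at `a` of `f z` and `f (-z)`. -/
lemma ncard_fiber_le {w : ℕ → ℝ} {S : Set ℕ} {γ : ℂ}
    (hsum : Summable (fun k : S => 1 / (w k) ^ 2))
    (heven : ∀ z, Complex.exp (γ * z) * canonProd w S z
      = Complex.exp (γ * -z) * canonProd w S (-z))
    (hfin : ∀ a ≠ 0, {k ∈ S | w k = a}.Finite) {a : ℝ} (ha : a ≠ 0) :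
    {k ∈ S | w k = a}.ncard ≤ {k ∈ S | w k = -a}.ncard := by
  have hsub : ∀ B ⊆ S, Summable (fun k : B => 1 / (w k) ^ 2) := fun B hB =>
    summable_mono hsum hB
  have haC : (a : ℂ) ≠ 0 := by exact_mod_cast ha
  have hsplit : ∀ b : ℝ, b ≠ 0 → ∀ z, canonProd w S z =
      elemFactor (z / (b : ℂ)) ^ {k ∈ S | w k = b}.ncard *
        canonProd w {k ∈ S | w k ≠ b} z := fun b hb z => by
    rw [← canonProd_const (hfin b hb) (fun k hk => hk.2), ← canonProd_union _
      (hsub _ fun k hk => hk.1) (hsub _ fun k hk => hk.1)]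
    · congr 1; ext k; simp only [Set.mem_union, Set.mem_ofPred_eq]; tauto
    · rw [Set.disjoint_left]; exact fun k hk hk' => hk'.2 hk.2
  have hc : ∀ b, Continuous (canonProd w {k ∈ S | w k ≠ b}) := fun b =>
    continuous_canonProd (hsub _ fun k hk => hk.1)
  refine order_le (b := fun z => elemFactor (-z / (a : ℂ))) (p := (a : ℂ))
    (G := fun z => Complex.exp (γ * z) * canonProd w {k ∈ S | w k ≠ -a} z)
    (H := fun z => Complex.exp (γ * -z) * canonProd w {k ∈ S | w k ≠ a} (-z))
    (continuous_elemFactor.comp (by fun_prop)) (by have := hc (-a); fun_prop)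
    (by have := hc a; fun_prop) (fun z => ?_) ?_ (fun z => ?_)
  · rw [elemFactor_eq_zero_iff, neg_div, neg_inj, div_eq_one_iff_eq haC]
  · refine mul_ne_zero (Complex.exp_ne_zero _) (canonProd_ne_zero (hsub _ fun k hk => hk.1) ?_)
    rintro k ⟨-, hk⟩ h0
    rw [elemFactor_eq_zero_iff] at h0
    by_cases hw : w k = 0
    · simp [hw] at h0
    · rw [div_eq_iff (by exact_mod_cast hw)] at h0
      apply hk
      have : a = -w k := by exact_mod_cast (by simpa using h0 : (a : ℂ) = -(w k : ℂ))
      linarith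
  · have h := heven z
    rw [hsplit (-a) (neg_ne_zero.2 ha) z, hsplit a ha (-z)] at h
    have e : z / ((-a : ℝ) : ℂ) = -z / (a : ℂ) := by push_cast; rw [div_neg, neg_div]
    rw [e] at h
    linear_combination h

lemma ncard_fiber_eq {w : ℕ → ℝ} {S : Set ℕ} {γ : ℂ}
    (hsum : Summable (fun k : S => 1 / (w k) ^ 2))
    (heven : ∀ z, Complex.exp (γ * z) * canonProd w S z
      = Complex.exp (γ * -z) * canonProd w S (-z))
    (hfin : ∀ a ≠ 0, {k ∈ S | w k = a}.Finite) {a : ℝ} (ha : a ≠ 0) :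
    {k ∈ S | w k = a}.ncard = {k ∈ S | w k = -a}.ncard := by
  refine le_antisymm (ncard_fiber_le hsum heven hfin ha) ?_
  simpa using ncard_fiber_le hsum heven hfin (neg_ne_zero.2 ha)

lemma finite_fiber {w : ℕ → ℝ} {S : Set ℕ} (hsum : Summable (fun k : S => 1 / (w k) ^ 2))
    {a : ℝ} (ha : a ≠ 0) : {k ∈ S | w k = a}.Finite := by
  have hpos : 0 < 1 / a ^ 2 := by positivity
  have h := (hsum.tendsto_cofinite_zero.eventually_lt_const hpos)
  rw [eventually_cofinite] at h
  refine (h.image Subtype.val).subset ?_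
  rintro k ⟨hk, rfl⟩
  exact ⟨⟨k, hk⟩, by simp, rfl⟩

/-- Maps whose fibres are equinumerous differ by a bijection of their domains. -/
lemma exists_equiv_of_fiber {α β γ : Type*} (φ : α → γ) (ψ : β → γ)
    (h : ∀ c, Nonempty ({x // φ x = c} ≃ {y // ψ y = c})) : ∃ e : α ≃ β, ∀ x, ψ (e x) = φ x := by
  let e := fun c => (h c).some
  refine ⟨((Equiv.sigmaFiberEquiv φ).symm.trans (Equiv.sigmaCongrRight e)).trans
    (Equiv.sigmaFiberEquiv ψ), fun x => ?_⟩
  exact (e (φ x) ⟨x, rfl⟩).2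

lemma exists_sign_equiv {w : ℕ → ℝ} {S : Set ℕ}
    (hfin : ∀ a ≠ 0, {k ∈ S | w k = a}.Finite)
    (hcard : ∀ a ≠ 0, {k ∈ S | w k = a}.ncard = {k ∈ S | w k = -a}.ncard) :
    ∃ e : {k ∈ S | 0 < w k} ≃ {k ∈ S | w k < 0}, ∀ k, w (e k) = -w k := by
  obtain ⟨e, he⟩ := exists_equiv_of_fiber (fun k : {k ∈ S | 0 < w k} => w k)
    (fun k : {k ∈ S | w k < 0} => -w k) (fun a => by
      rcases le_or_gt a 0 with ha | ha
      · have : IsEmpty {k : {k ∈ S | 0 < w k} // w k = a} :=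
          ⟨fun k => by have := k.1.2.2; have := k.2; linarith⟩
        have : IsEmpty {k : {k ∈ S | w k < 0} // -w k = a} :=
          ⟨fun k => by have := k.1.2.2; have := k.2; linarith⟩
        exact ⟨Equiv.equivOfIsEmpty _ _⟩
      · have := (hfin a ha.ne').to_subtype
        have := (hfin (-a) (neg_ne_zero.2 ha.ne')).to_subtype
        obtain ⟨e⟩ : Nonempty ({k ∈ S | w k = a} ≃ {k ∈ S | w k = -a}) :=
          Finite.card_eq.1 (hcard a ha.ne')
        refine ⟨Equiv.trans ?_ (e.trans ?_)⟩
        · exact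
            { toFun := fun k => ⟨k.1, k.1.2.1, k.2⟩
              invFun := fun k => ⟨⟨k, k.2.1, by rw [k.2.2]; exact ha⟩, k.2.2⟩
              left_inv := fun _ => rfl
              right_inv := fun _ => rfl }
        · exact
            { toFun := fun k => ⟨⟨k, k.2.1, by rw [k.2.2]; linarith⟩, by
                change -w k = a
                rw [k.2.2, neg_neg]⟩
              invFun := fun k => ⟨k.1, k.1.2.1, by have := k.2; linarith⟩
              left_inv := fun _ => rfl
              right_inv := fun _ => rfl })
  exact ⟨e, fun k => by rw [← he k, neg_neg]⟩

/-- The exponential factor `e^{γz}` of an even function is trivial once the rest of the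
function is even, continuous and nonzero at `0`. -/
lemma gamma_eq_zero {γ : ℂ} {Q : ℂ → ℂ} (hQ : Continuous Q) (hQ0 : Q 0 ≠ 0)
    (h : ∀ z, Complex.exp (γ * z) * Q z = Complex.exp (γ * -z) * Q z) : γ = 0 := by
  have hev : (fun z => Complex.exp (2 * γ * z)) =ᶠ[𝓝 0] fun _ => 1 := by
    filter_upwards [hQ.continuousAt.eventually_ne hQ0] with z hz
    have h1 : Complex.exp (γ * z) = Complex.exp (γ * -z) := mul_right_cancel₀ hz (h z)
    calc Complex.exp (2 * γ * z) = Complex.exp (γ * z) * Complex.exp (γ * z) := by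
          rw [← Complex.exp_add]; ring_nf
      _ = Complex.exp (γ * z) * Complex.exp (γ * -z) := by rw [← h1]
      _ = 1 := by rw [← Complex.exp_add]; simp
  have hd : HasDerivAt (fun z => Complex.exp (2 * γ * z)) (2 * γ) 0 := by
    simpa using ((hasDerivAt_id (0 : ℂ)).const_mul (2 * γ)).cexp
  have := (hd.congr_of_eventuallyEq hev.symm).unique (hasDerivAt_const (0 : ℂ) (1 : ℂ))
  simpa using this

/-! ### The reduction -/

/-- Let `f` be an entire function with Hadamard factorization
`f(z) = c·z^N·e^{γz}·∏_k (1 + z/wₖ)·e^{-z/wₖ}`, the `wₖ` nonzero reals (finitely or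
countably many) with `∑ 1/wₖ² < ∞`. If `f` is even and `f(0)` is real and strictly
positive, then `N = 0`, `c = f(0) > 0`, and there is a collection of positive reals `αᵣ`
with `∑ 1/αᵣ² < ∞` such that `f(z) = c·∏_r (1 - z²/αᵣ²)` for all `z`. -/
theorem even_hadamard_reduction (f : ℂ → ℂ) (hf_entire : Differentiable ℂ f)
    (c γ : ℂ) (N : ℕ) (S : Set ℕ) (w : ℕ → ℝ) (hw : ∀ k ∈ S, w k ≠ 0)
    (hsum : Summable (fun k : S => 1 / (w k : ℝ) ^ 2))
    (hf : ∀ z : ℂ, f z = c * z ^ N * Complex.exp (γ * z) *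
      ∏' k : S, ((1 + z / (w k : ℂ)) * Complex.exp (-z / (w k : ℂ))))
    (heven : ∀ z : ℂ, f (-z) = f z)
    (hreal : (f 0).im = 0) (hpos : 0 < (f 0).re) :
    N = 0 ∧ c = f 0 ∧
    ∃ (S' : Set ℕ) (a : ℕ → ℝ), (∀ r ∈ S', 0 < a r) ∧
      Summable (fun r : S' => 1 / (a r : ℝ) ^ 2) ∧
      ∀ z : ℂ, f z = c * ∏' r : S', (1 - z ^ 2 / (a r : ℂ) ^ 2) := by
  have hcan : ∀ z, ∏' k : S, ((1 + z / (w k : ℂ)) * Complex.exp (-z / (w k : ℂ)))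
      = canonProd w S z := fun z => by simp only [canonProd, elemFactor, neg_div]
  simp only [hcan] at hf
  have hcan0 : ∀ A, canonProd w A 0 = 1 := fun A => by simp [canonProd, elemFactor]
  have hf0 : f 0 ≠ 0 := fun h => by simp [h] at hpos
  have hN : N = 0 := by
    by_contra hN
    exact hf0 (by rw [hf 0, zero_pow hN]; simp)
  subst hN
  have hc : c = f 0 := by rw [hf 0, hcan0]; simp
  have hc0 : c ≠ 0 := hc ▸ hf0
  have hev : ∀ z, Complex.exp (γ * z) * canonProd w S z
      = Complex.exp (γ * -z) * canonProd w S (-z) := fun z => by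
    have h := heven z
    rw [hf, hf z] at h
    apply mul_left_cancel₀ hc0
    linear_combination -h
  have hfin : ∀ a ≠ 0, {k ∈ S | w k = a}.Finite := fun a ha => finite_fiber hsum ha
  obtain ⟨e, he⟩ := exists_sign_equiv hfin fun a ha => ncard_fiber_eq hsum hev hfin ha
  have hP : Summable (fun k : {k ∈ S | 0 < w k} => 1 / (w k) ^ 2) :=
    summable_mono hsum fun k hk => hk.1
  have hM : Summable (fun k : {k ∈ S | w k < 0} => 1 / (w k) ^ 2) :=
    summable_mono hsum fun k hk => hk.1
  have hS : S = {k ∈ S | 0 < w k} ∪ {k ∈ S | w k < 0} := by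
    ext k
    simp only [Set.mem_union, Set.mem_ofPred_eq, ← and_or_left]
    exact ⟨fun hk => ⟨hk, (hw k hk).lt_or_gt.symm⟩, fun hk => hk.1⟩
  have hQ : ∀ z, canonProd w S z
      = ∏' r : {k ∈ S | 0 < w k}, (1 - z ^ 2 / (w r : ℂ) ^ 2) := fun z => by
    have hneg : ∀ k, elemFactor (z / (w (e k) : ℂ)) = elemFactor (-(z / (w k : ℂ))) := fun k => by
      rw [he k]; push_cast; rw [div_neg]
    have hmul : Multipliable fun k : {k ∈ S | 0 < w k} => elemFactor (-(z / (w k : ℂ))) :=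
      ((e.multipliable_iff).2 (multipliable_elemFactor hM z)).congr hneg
    have hminus : canonProd w {k ∈ S | w k < 0} z
        = ∏' k : {k ∈ S | 0 < w k}, elemFactor (-(z / (w k : ℂ))) := by
      rw [canonProd, ← e.tprod_eq]
      exact tprod_congr hneg
    conv_lhs => rw [hS]
    rw [canonProd_union _ hP hM, hminus, canonProd,
      ← (multipliable_elemFactor hP z).tprod_mul hmul]
    · exact tprod_congr fun k => by rw [elemFactor_mul_neg, div_pow]
    · rw [Set.disjoint_left]; exact fun k hk hk' => lt_asymm hk.2 hk'.2
  have hγ : γ = 0 := by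
    refine gamma_eq_zero (continuous_canonProd hsum) (by simp [hcan0]) fun z => ?_
    rw [hev z]
    congr 1
    rw [hQ, hQ]
    simp
  refine ⟨rfl, hc, {k ∈ S | 0 < w k}, w, fun r hr => hr.2, hP, fun z => ?_⟩
  rw [hf z, hQ z, hγ]
  simp
end
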